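/- arXiv:2311.02547 — 5 statements merged into one kernel-verified Lean document; each statement's English description precedes it below -/
import Mathlib

section
/- Let d, e ≥ 1 be integers, μ ∈ {1,−1}^d and ν ∈ {1,−1}^e. Then for every shuffle ξ ∈ {1,−1}^{d+e} of p(μ) and p(ν), one has sgn_T(q(ξ)) = sgn_T(μ)·sgn_T(ν). -/
/-- `p(μ) = (μ₁, μ₁μ₂, …, μ₁μ₂⋯μ_d)`, the partial-products map. -/
def pSigns {d : ℕ} (μ : Fin d → ℤ) : Fin d → ℤ :=
  fun i => ∏ j ∈ Finset.Iic i, μ j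

/-- `q(μ) = (μ₁, μ₂μ₁, μ₃μ₂, …, μ_dμ_{d−1})`, the consecutive-products map. -/
def qSigns {d : ℕ} (μ : Fin d → ℤ) : Fin d → ℤ :=
  fun i => if (i : ℕ) = 0 then μ i
    else μ i * μ ⟨(i : ℕ) - 1, Nat.lt_of_le_of_lt (Nat.sub_le _ _) i.isLt⟩

/-- The `T`-sign `sgn_T(μ) = ∏_{1 ≤ j ≤ d, j ≡ d (mod 2)} μ_j` (here `i : Fin d`
corresponds to `j = i + 1`). -/
def sgnT {d : ℕ} (μ : Fin d → ℤ) : ℤ :=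
  ∏ i ∈ Finset.univ.filter (fun i : Fin d => ((i : ℕ) + 1) % 2 = d % 2), μ i

/-- `ξ` is a shuffle of `α` and `β`: there are strictly increasing maps with disjoint
ranges along which `ξ` restricts to `α` and `β`. -/
def IsShuffle {d e : ℕ} (α : Fin d → ℤ) (β : Fin e → ℤ) (ξ : Fin (d + e) → ℤ) : Prop :=
  ∃ (f : Fin d → Fin (d + e)) (g : Fin e → Fin (d + e)),
    StrictMono f ∧ StrictMono g ∧ (∀ i j, f i ≠ g j) ∧
    (∀ i, ξ (f i) = α i) ∧ (∀ j, ξ (g j) = β j)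

/-! The factors of `sgn_T(q(ξ))` pair up the consecutive entries of `ξ`, counting from the end, so
`sgn_T(q(ξ))` is the product of all entries of `ξ`. On the other hand `μ_j` occurs `d - j + 1` times
in the product of all entries of `p(μ)`, so for signs only the `j ≡ d (mod 2)` survive and that
product is `sgn_T(μ)`. The product of all entries of a shuffle does not depend on their order. -/

theorem sgnT_succ_succ {n : ℕ} (μ : Fin (n + 2) → ℤ) :
    sgnT μ = sgnT (fun i : Fin n => μ i.castSucc.castSucc) * μ (Fin.last (n + 1)) := by
  have penultimate_excluded : (n + 1) % 2 ≠ n % 2 := by lia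
  have last_included : (n + 1 + 1) % 2 = n % 2 := by lia
  simp [sgnT, Finset.prod_filter, Fin.prod_univ_castSucc, penultimate_excluded, last_included]

theorem qSigns_succ {n : ℕ} (ξ : Fin (n + 1) → ℤ) (i : Fin n) :
    qSigns ξ i.succ = ξ i.succ * ξ i.castSucc :=
  if_neg (Nat.succ_ne_zero i)

theorem sgnT_qSigns : ∀ {n : ℕ} (ξ : Fin n → ℤ), sgnT (qSigns ξ) = ∏ i, ξ i
  | 0, ξ => by simp [sgnT]
  | 1, ξ => by simp [sgnT, qSigns]
  | n + 2, ξ =>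
    calc sgnT (qSigns ξ)
        = sgnT (qSigns fun i : Fin n => ξ i.castSucc.castSucc) *
            qSigns ξ (Fin.last (n + 1)) := sgnT_succ_succ _
      _ = (∏ i : Fin n, ξ i.castSucc.castSucc) *
            (ξ (Fin.last (n + 1)) * ξ (Fin.last n).castSucc) := by
          rw [sgnT_qSigns, ← Fin.succ_last, qSigns_succ]
      _ = ∏ i, ξ i := by
          rw [Fin.prod_univ_castSucc, Fin.prod_univ_castSucc, mul_comm (ξ (Fin.last (n + 1))),
            mul_assoc]

theorem prod_pSigns_eq_prod_pow {d : ℕ} (μ : Fin d → ℤ) :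
    ∏ i, pSigns μ i = ∏ j, μ j ^ (d - (j : ℕ)) :=
  calc ∏ i, ∏ j ∈ Finset.Iic i, μ j
      = ∏ j, ∏ _i ∈ Finset.Ici j, μ j := Finset.prod_comm' (by simp)
    _ = ∏ j, μ j ^ (d - (j : ℕ)) := by simp only [Finset.prod_const, Fin.card_Ici]

theorem sgnT_eq_prod_pow {d : ℕ} {μ : Fin d → ℤ} (hμ : ∀ i, μ i = 1 ∨ μ i = -1) :
    sgnT μ = ∏ j, μ j ^ (d - (j : ℕ)) := by
  rw [sgnT, Finset.prod_filter]
  refine Finset.prod_congr rfl fun j _ => ?_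
  have selected_iff_odd : ((j : ℕ) + 1) % 2 = d % 2 ↔ Odd (d - (j : ℕ)) := by
    rw [Nat.odd_iff]; lia
  simp only [selected_iff_odd]
  split_ifs with hodd
  · rcases hμ j with h | h <;> simp [h, hodd.neg_one_pow]
  · rcases hμ j with h | h <;> simp [h, (Nat.not_odd_iff_even.mp hodd).neg_one_pow]

theorem prod_pSigns_eq_sgnT {d : ℕ} {μ : Fin d → ℤ} (hμ : ∀ i, μ i = 1 ∨ μ i = -1) :
    ∏ i, pSigns μ i = sgnT μ :=
  (prod_pSigns_eq_prod_pow μ).trans (sgnT_eq_prod_pow hμ).symm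

theorem IsShuffle.exists_equiv {d e : ℕ} {α : Fin d → ℤ} {β : Fin e → ℤ} {ξ : Fin (d + e) → ℤ}
    (hξ : IsShuffle α β ξ) : ∃ σ : Fin d ⊕ Fin e ≃ Fin (d + e), ξ ∘ σ = Sum.elim α β := by
  obtain ⟨f, g, hf, hg, hfg, hα, hβ⟩ := hξ
  have elim_injective : Function.Injective (Sum.elim f g) :=
    hf.injective.sumElim hg.injective hfg
  have elim_bijective : Function.Bijective (Sum.elim f g) :=
    (Fintype.bijective_iff_injective_and_card _).mpr ⟨elim_injective, by simp⟩
  refine ⟨Equiv.ofBijective _ elim_bijective, funext ?_⟩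
  rintro (i | j)
  · exact hα i
  · exact hβ j

theorem sgnT_of_shuffle_general {d e n : ℕ} {μ : Fin d → ℤ} {ν : Fin e → ℤ}
    (hμ : ∀ i, μ i = 1 ∨ μ i = -1) (hν : ∀ j, ν j = 1 ∨ ν j = -1) {ξ : Fin n → ℤ}
    (σ : Fin d ⊕ Fin e ≃ Fin n) (hσ : ξ ∘ σ = Sum.elim (pSigns μ) (pSigns ν)) :
    sgnT (qSigns ξ) = sgnT μ * sgnT ν :=
  calc sgnT (qSigns ξ)
      = ∏ k, ξ k := sgnT_qSigns ξ
    _ = ∏ s, Sum.elim (pSigns μ) (pSigns ν) s := by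
      rw [← hσ, ← σ.prod_comp ξ]; rfl
    _ = (∏ i, pSigns μ i) * ∏ j, pSigns ν j := Fintype.prod_sum_type _
    _ = sgnT μ * sgnT ν := by rw [prod_pSigns_eq_sgnT hμ, prod_pSigns_eq_sgnT hν]

theorem sgnT_of_shuffle (d e : ℕ) (hd : 1 ≤ d) (he : 1 ≤ e)
    (μ : Fin d → ℤ) (ν : Fin e → ℤ)
    (hμ : ∀ i, μ i = 1 ∨ μ i = -1) (hν : ∀ j, ν j = 1 ∨ ν j = -1)
    (ξ : Fin (d + e) → ℤ) (hξ : IsShuffle (pSigns μ) (pSigns ν) ξ) :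
    sgnT (qSigns ξ) = sgnT μ * sgnT ν := by
  obtain ⟨σ, hσ⟩ := hξ.exists_equiv
  exact sgnT_of_shuffle_general hμ hν σ hσ
end

section
/- Let u ≥ 3 and d ≥ 0 be integers and q = u−1. Then Σ_{a+b=u, a≥2, b≥1} ζ(a,b̄,1̄,1_d) = ζ(q̄,1,1̄,1_d) − ζ(q̄,1̄,1,1_d) + ζ(ū,1̄,1_d) + ζ(q̄,2̄,1_d) + Σ_{j=1}^{d} ζ(q̄,1̄,1_{j−1},2,1_{d−j}). Here ζ(a,b̄,1̄,1_d) = ζ((a,b,1,1_d);(1,−1,−1,1,…,1)), ζ(q̄,1,1̄,1_d) = ζ((q,1,1,1_d);(−1,1,−1,1,…,1)), ζ(q̄,1̄,1,1_d) = ζ((q,1,1,1_d);(−1,−1,1,1,…,1)), ζ(ū,1̄,1_d) = ζ((u,1,1_d);(−1,−1,1,…,1)), ζ(q̄,2̄,1_d) = ζ((q,2,1_d);(−1,−1,1,…,1)), and ζ(q̄,1̄,1_{j−1},2,1_{d−j}) = ζ((q,1,1_{j−1},2,1_{d−j});(−1,−1,1,…,1)). -/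
/-!
Fixing the two largest indices `k > m` and summing `k^{-a} m^{a-u}` over `2 ≤ a < u` gives
`1 / (m^{q-1} k (k - m)) - 1 / (k^q (k - m))`.  For the first part, the sum over `k` telescopes to
the harmonic number `H_m` divided by `m`, and the quasi-shuffle product of `H_m` with the inner sum
produces the Euler sums of the right-hand side, among them `d + 1` copies of `ζ(q̄,1̄,1,1_d)`.  For
the second part, the sum over `m` is a convolution with `1 / n`, which multiplies generating
functions by `L = -log (1 - x)`.  Since `L^{d+1} / (d+1)!` generates the nested sums with all
arguments `1`, this yields `d + 2` copies of `ζ(q̄,1̄,1,1_d)`, and a single one survives with a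
minus sign.  The signs enter only through `(-1)² = 1`, so `-1` may be replaced by any unit of `ℤ`.
-/

/-- The Euler sum `ζ(s₁,…,s_d; μ₁,…,μ_d)
  = Σ_{k₁>⋯>k_d≥1} μ₁^{k₁}⋯μ_d^{k_d} / (k₁^{s₁}⋯k_d^{s_d})`. -/
noncomputable def eulerSum {d : ℕ} (s : Fin d → ℕ) (μ : Fin d → ℤ) : ℝ :=
  ∑' k : {k : Fin d → ℕ // StrictAnti k ∧ ∀ i, 0 < k i},
    ∏ i, ((μ i : ℝ) ^ k.1 i / (k.1 i : ℝ) ^ s i)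

open Finset

section Nested

/-- The operator sending `f` to the sequence `n ↦ ∑_{k < n} ε^k / k^s * f k`.  Truncated Euler sums
are obtained by iterating it.  For `s ≠ 0` the term `k = 0` vanishes, as `x / 0 = 0`. -/
noncomputable def weightedSum (ε : ℝ) (s : ℕ) : (ℕ → ℝ) →ₗ[ℝ] (ℕ → ℝ) where
  toFun f n := ∑ k ∈ range n, ε ^ k / (k : ℝ) ^ s * f k
  map_add' f g := by ext n; simp [mul_add, sum_add_distrib]
  map_smul' c f := by ext n; simp [mul_sum, mul_left_comm]

theorem weightedSum_apply (ε : ℝ) (s : ℕ) (f : ℕ → ℝ) (n : ℕ) :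
    weightedSum ε s f n = ∑ k ∈ range n, ε ^ k / (k : ℝ) ^ s * f k := rfl

/-- The Euler sum restricted to indices `n > k₁ > ⋯ > k_d ≥ 1`, as a function of `n`. -/
noncomputable def truncatedEulerSum : {d : ℕ} → (Fin d → ℕ) → (Fin d → ℤ) → ℕ → ℝ
  | 0, _, _ => 1
  | _ + 1, s, μ => weightedSum (μ 0) (s 0) (truncatedEulerSum (Fin.tail s) (Fin.tail μ))

/-- The quasi-shuffle product of nested sums. -/
theorem weightedSum_mul_weightedSum (ε δ : ℝ) (s t : ℕ) (f g : ℕ → ℝ) :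
    weightedSum ε s f * weightedSum δ t g =
      weightedSum ε s (f * weightedSum δ t g) + weightedSum δ t (weightedSum ε s f * g) +
        weightedSum (ε * δ) (s + t) (f * g) := by
  ext n
  induction n with
  | zero => simp [weightedSum_apply]
  | succ n ih =>
    simp only [Pi.mul_apply, Pi.add_apply, weightedSum_apply, sum_range_succ] at ih ⊢
    rw [mul_pow, pow_add, ← div_mul_div_comm]
    linear_combination ih

end Nested

section EulerSeries

variable {d : ℕ}

/-- The summand of `eulerSum`, extended by zero to all tuples. -/
noncomputable def eulerTerm (s : Fin d → ℕ) (μ : Fin d → ℤ) : (Fin d → ℕ) → ℝ :=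
  {k | StrictAnti k ∧ ∀ i, 0 < k i}.indicator fun k => ∏ i, ((μ i : ℝ) ^ k i / (k i : ℝ) ^ s i)

theorem eulerSum_eq_tsum_eulerTerm (s : Fin d → ℕ) (μ : Fin d → ℤ) :
    eulerSum s μ = ∑' k, eulerTerm s μ k :=
  _root_.tsum_subtype {k : Fin d → ℕ | StrictAnti k ∧ ∀ i, 0 < k i} fun k =>
    ∏ i, ((μ i : ℝ) ^ k i / (k i : ℝ) ^ s i)

theorem strictAnti_finCons_iff (a : ℕ) (t : Fin d → ℕ) :
    StrictAnti (Fin.cons a t : Fin (d + 1) → ℕ) ↔ (∀ i, t i < a) ∧ StrictAnti t := by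
  simp [StrictAnti, Fin.forall_fin_succ]

theorem eulerTerm_cons {s : Fin (d + 1) → ℕ} (hs : s 0 ≠ 0) (μ : Fin (d + 1) → ℤ)
    (k : ℕ) (t : Fin d → ℕ) :
    eulerTerm s μ (Fin.cons k t) = (μ 0 : ℝ) ^ k / (k : ℝ) ^ s 0 *
      if ∀ i, t i < k then eulerTerm (Fin.tail s) (Fin.tail μ) t else 0 := by
  classical
  rcases k.eq_zero_or_pos with rfl | hk
  · simp [eulerTerm, Fin.forall_fin_succ, hs]
  · simp only [eulerTerm, Set.indicator_apply, Set.mem_ofPred_eq, strictAnti_finCons_iff,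
      Fin.forall_fin_succ, Fin.prod_univ_succ, Fin.cons_zero, Fin.cons_succ, hk, true_and,
      Fin.tail, ← ite_and, mul_ite, mul_zero, and_assoc]

theorem sum_piFinset_succ {α M : Type*} [AddCommMonoid M] (A : Finset α)
    (F : (Fin (d + 1) → α) → M) :
    ∑ t ∈ Fintype.piFinset fun _ : Fin (d + 1) => A, F t =
      ∑ k ∈ A, ∑ t ∈ Fintype.piFinset fun _ : Fin d => A, F (Fin.cons k t) := by
  rw [← sum_product']
  exact (sum_equiv (Fin.consEquiv fun _ => α)
    (by simp [Fin.forall_fin_succ, Fin.consEquiv]) (by simp [Fin.consEquiv])).symm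

theorem sum_piFinset_eulerTerm {s : Fin d → ℕ} (hs : ∀ i, s i ≠ 0) (μ : Fin d → ℤ) (n : ℕ) :
    ∑ t ∈ Fintype.piFinset fun _ => range n, eulerTerm s μ t = truncatedEulerSum s μ n := by
  induction d generalizing n with
  | zero => simp [eulerTerm, truncatedEulerSum, StrictAnti]
  | succ d ih =>
    rw [sum_piFinset_succ, truncatedEulerSum, weightedSum_apply]
    refine sum_congr rfl fun k hk => ?_
    simp only [eulerTerm_cons (hs 0)]
    rw [← ih (s := Fin.tail s) (fun i => hs i.succ), ← mul_sum, ← sum_filter]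
    congr 2
    ext t
    have hkn : k < n := mem_range.1 hk
    simpa using fun h i => (h i).trans hkn

theorem hasSum_eulerTerm_cons {s : Fin (d + 1) → ℕ} (hs : ∀ i, s i ≠ 0) (μ : Fin (d + 1) → ℤ)
    (k : ℕ) :
    HasSum (fun t => eulerTerm s μ (Fin.cons k t))
      ((μ 0 : ℝ) ^ k / (k : ℝ) ^ s 0 * truncatedEulerSum (Fin.tail s) (Fin.tail μ) k) := by
  simp only [eulerTerm_cons (hs 0)]
  rw [← sum_piFinset_eulerTerm (s := Fin.tail s) (fun i => hs i.succ)]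
  refine HasSum.mul_left _ ?_
  convert hasSum_sum_of_ne_finset_zero (L := .unconditional _)
    (s := Fintype.piFinset fun _ => range k) fun t ht => ?_ using 1
  · exact sum_congr rfl fun t ht => (if_pos (by simpa using ht)).symm
  · exact if_neg (by simpa using ht)

theorem summable_finPi_prod {ι : Type*} {f : Fin d → ι → ℝ} (hf₀ : ∀ i, 0 ≤ f i)
    (hf : ∀ i, Summable (f i)) : Summable fun t : Fin d → ι => ∏ i, f i (t i) := by
  induction d with
  | zero => exact .of_finite
  | succ d ih =>
    rw [← (Fin.consEquiv fun _ => ι).summable_iff]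
    convert (hf 0).mul_of_nonneg (ih (fun i => hf₀ i.succ) fun i => hf i.succ) (hf₀ 0)
      (fun t => prod_nonneg fun i _ => hf₀ i.succ (t i)) using 2 with p
    simp [Fin.consEquiv, Fin.prod_univ_succ]

variable {s : Fin (d + 1) → ℕ} {μ : Fin (d + 1) → ℤ}

/-- As `k 0` is the largest index, one of its two powers can be shared equally among all the
indices, which leaves each of them with an exponent larger than `1`. -/
theorem abs_eulerTerm_le (hs : ∀ i, s i ≠ 0) (hs₀ : 2 ≤ s 0) (hμ : ∀ i, |μ i| ≤ 1)
    (k : Fin (d + 1) → ℕ) :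
    |eulerTerm s μ k| ≤ ∏ i, (k i : ℝ) ^ (-1 - 1 / (d + 1) : ℝ) := by
  by_cases hk : k ∈ {k : Fin (d + 1) → ℕ | StrictAnti k ∧ ∀ i, 0 < k i}
  swap
  · rw [eulerTerm, Set.indicator_of_notMem hk, abs_zero]
    positivity
  have hk₀ (i) : (0 : ℝ) < k i := Nat.cast_pos.2 (hk.2 i)
  have hk₁ (i) : (1 : ℝ) ≤ k i := Nat.one_le_cast.2 (hk.2 i)
  have hμ' (i) : |(μ i : ℝ)| ≤ 1 := mod_cast hμ i
  have share : ((k 0 : ℝ))⁻¹ ≤ ∏ i, (k i : ℝ) ^ (-(1 / (d + 1)) : ℝ) := calc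
    ((k 0 : ℝ))⁻¹ = ∏ _i : Fin (d + 1), (k 0 : ℝ) ^ (-(1 / (d + 1)) : ℝ) := by
      rw [prod_const, card_univ, Fintype.card_fin, ← Real.rpow_natCast, ← Real.rpow_mul (hk₀ 0).le,
        ← Real.rpow_neg_one]
      congr 1
      push_cast
      field_simp
    _ ≤ _ := prod_le_prod (fun i _ => by positivity) fun i _ =>
      Real.rpow_le_rpow_of_nonpos (hk₀ i) (Nat.cast_le.2 (hk.1.antitone (Fin.zero_le i)))
        (by simp only [Left.neg_nonpos_iff]; positivity)
  calc |eulerTerm s μ k| = ∏ i, |(μ i : ℝ)| ^ k i / (k i : ℝ) ^ s i := by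
        rw [eulerTerm, Set.indicator_of_mem hk, abs_prod]
        simp [abs_div, abs_pow]
    _ ≤ ∏ i, 1 / (k i : ℝ) ^ s i := by
        gcongr with i
        exact pow_le_one₀ (abs_nonneg _) (hμ' i)
    _ ≤ (k 0 : ℝ)⁻¹ * ∏ i, (k i : ℝ)⁻¹ := by
        simp only [Fin.prod_univ_succ, ← mul_assoc, one_div, ← sq, inv_pow]
        gcongr with i
        · exact pow_pos (hk₀ 0) 2
        · exact hk₁ 0
        · exact hk₀ _
        · exact le_self_pow₀ (hk₁ _) (hs _)
    _ ≤ (∏ i, (k i : ℝ) ^ (-(1 / (d + 1)) : ℝ)) * ∏ i, (k i : ℝ)⁻¹ := by gcongr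
    _ = ∏ i, (k i : ℝ) ^ (-1 - 1 / (d + 1) : ℝ) := by
        rw [← prod_mul_distrib]
        refine prod_congr rfl fun i _ => ?_
        rw [← Real.rpow_neg_one, ← Real.rpow_add (hk₀ i)]
        ring_nf

theorem summable_eulerTerm (hs : ∀ i, s i ≠ 0) (hs₀ : 2 ≤ s 0) (hμ : ∀ i, |μ i| ≤ 1) :
    Summable (eulerTerm s μ) := by
  have exponent : (-1 - 1 / (d + 1) : ℝ) < -1 := sub_lt_self _ (by positivity)
  have majorant := summable_finPi_prod (d := d + 1) (ι := ℕ)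
    (f := fun _ n => (n : ℝ) ^ (-1 - 1 / (d + 1) : ℝ))
    (fun _ _ => Real.rpow_nonneg (Nat.cast_nonneg _) _)
    fun _ => Real.summable_nat_rpow.2 exponent
  exact .of_norm_bounded majorant (abs_eulerTerm_le hs hs₀ hμ)

theorem hasSum_eulerSum (hs : ∀ i, s i ≠ 0) (hs₀ : 2 ≤ s 0) (hμ : ∀ i, |μ i| ≤ 1) :
    HasSum (fun k : ℕ => (μ 0 : ℝ) ^ k / (k : ℝ) ^ s 0 *
      truncatedEulerSum (Fin.tail s) (Fin.tail μ) k) (eulerSum s μ) := by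
  rw [eulerSum_eq_tsum_eulerTerm]
  exact ((Fin.consEquiv fun _ => ℕ).hasSum_iff.2 (summable_eulerTerm hs hs₀ hμ).hasSum
    ).prod_fiberwise (hasSum_eulerTerm_cons hs μ)

end EulerSeries

section Ones

/-- The truncated Euler sum with arguments `1_d`. -/
noncomputable def onesSum (d : ℕ) : ℕ → ℝ :=
  truncatedEulerSum (fun _ : Fin d => 1) fun _ => 1

/-- The truncated Euler sum of depth `d` with arguments `1_j, 2, 1_{d-j-1}`, for `j < d`. -/
noncomputable def onesTwoSum (d j : ℕ) : ℕ → ℝ :=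
  truncatedEulerSum (fun i : Fin d => if (i : ℕ) = j then 2 else 1) fun _ => 1

theorem onesSum_zero : onesSum 0 = 1 := rfl

theorem onesSum_succ (d : ℕ) : onesSum (d + 1) = weightedSum 1 1 (onesSum d) := by
  simp only [onesSum, truncatedEulerSum, Int.cast_one]
  rfl

theorem onesTwoSum_zero_right (d : ℕ) :
    onesTwoSum (d + 1) 0 = weightedSum 1 2 (onesSum d) := by
  simp [onesTwoSum, onesSum, truncatedEulerSum, Fin.tail_def]

theorem onesTwoSum_succ (d j : ℕ) :
    onesTwoSum (d + 1) (j + 1) = weightedSum 1 1 (onesTwoSum d j) := by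
  simp [onesTwoSum, truncatedEulerSum, Fin.tail_def]

theorem onesSum_one_mul_onesSum (d : ℕ) :
    onesSum 1 * onesSum d =
      ((d : ℝ) + 1) • onesSum (d + 1) + ∑ j ∈ range d, onesTwoSum d j := by
  induction d with
  | zero => simp [onesSum_zero]
  | succ d ih =>
    rw [onesSum_succ 0, onesSum_succ d, weightedSum_mul_weightedSum, ← onesSum_succ 0,
      ← onesSum_succ d, onesSum_zero, one_mul, one_mul, one_mul, ← onesSum_succ (d + 1), ih,
      sum_range_succ']
    simp only [onesTwoSum_succ, onesTwoSum_zero_right, map_add, map_smul, map_sum,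
      ← onesSum_succ (d + 1)]
    push_cast
    module

theorem harmonic_eq_onesSum_one_add (n : ℕ) : (harmonic n : ℝ) = onesSum 1 n + 1 / n := by
  induction n with
  | zero => simp [onesSum_succ, weightedSum_apply]
  | succ n ih =>
    rw [harmonic_succ, Rat.cast_add, ih]
    simp [onesSum_succ, onesSum_zero, weightedSum_apply, sum_range_succ]

theorem harmonic_mul_weightedSum_onesSum (ε : ℝ) (d n : ℕ) :
    harmonic n * weightedSum ε 1 (onesSum d) n =
      weightedSum 1 1 (weightedSum ε 1 (onesSum d)) n +
        (d + 1) * weightedSum ε 1 (onesSum (d + 1)) n + weightedSum ε 1 (onesSum d) n / n +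
        weightedSum ε 2 (onesSum d) n + ∑ j ∈ range d, weightedSum ε 1 (onesTwoSum d j) n := by
  have shuffle := congrFun (weightedSum_mul_weightedSum 1 ε 1 1 1 (onesSum d)) n
  rw [← onesSum_zero, ← onesSum_succ 0, onesSum_one_mul_onesSum, onesSum_zero] at shuffle
  simp only [one_mul, map_add, map_smul, map_sum, Pi.mul_apply, Pi.add_apply, Pi.smul_apply,
    Finset.sum_apply, smul_eq_mul] at shuffle
  rw [harmonic_eq_onesSum_one_add]
  linear_combination shuffle

end Ones

section GeneratingFunctions

open PowerSeries

/-- The power series `∑ f n / n * X^n`, with zero constant term as `x / 0 = 0`. -/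
noncomputable def divSeries (f : ℕ → ℝ) : PowerSeries ℝ := .mk fun n => f n / n

theorem coeff_divSeries (f : ℕ → ℝ) (n : ℕ) : coeff n (divSeries f) = f n / n :=
  coeff_mk _ _

theorem constantCoeff_divSeries (f : ℕ → ℝ) : constantCoeff (divSeries f) = 0 := by
  simp [← coeff_zero_eq_constantCoeff_apply, coeff_divSeries]

theorem derivative_divSeries_one : derivative ℝ (divSeries 1) = .mk 1 := by
  ext n
  have : (n : ℝ) + 1 ≠ 0 := by positivity
  simp [coeff_derivative, coeff_divSeries, this]

theorem derivative_divSeries_weightedSum (f : ℕ → ℝ) :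
    derivative ℝ (divSeries (weightedSum 1 1 f)) = divSeries f * .mk 1 := by
  ext n
  have : (n : ℝ) + 1 ≠ 0 := by positivity
  simp [coeff_derivative, coeff_divSeries, coeff_mul, weightedSum_apply, div_mul_cancel₀ _ this,
    Nat.sum_antidiagonal_eq_sum_range_succ_mk, inv_mul_eq_div]

/-- Both sides are `L^{d+2} / (d+1)!` for `L = -log (1 - X)`. -/
theorem divSeries_onesSum_mul (d : ℕ) :
    divSeries (onesSum d) * divSeries 1 = ((d : ℝ) + 2) • divSeries (onesSum (d + 1)) := by
  induction d with
  | zero =>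
    refine derivative.ext ?_ (by simp [constantCoeff_divSeries])
    simp only [Derivation.leibniz, Derivation.map_smul, onesSum_succ, onesSum_zero,
      derivative_divSeries_one, derivative_divSeries_weightedSum, smul_eq_mul]
    module
  | succ d ih =>
    refine derivative.ext ?_ (by simp [constantCoeff_divSeries])
    simp only [Derivation.leibniz, Derivation.map_smul, onesSum_succ, derivative_divSeries_one,
      derivative_divSeries_weightedSum, smul_eq_mul] at ih ⊢
    rw [mul_left_comm, ← mul_assoc, ih, smul_mul_assoc]
    push_cast
    module

theorem coeff_divSeries_mul_geometric {ε : ℝ} (hε : ε * ε = 1) (f : ℕ → ℝ) (m : ℕ) :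
    coeff m (divSeries f * (.mk (ε ^ ·) - 1)) = ε ^ m * weightedSum ε 1 f m := by
  have twist {l : ℕ} (hl : l ≤ m) : ε ^ (m - l) = ε ^ m * ε ^ l := by
    rw [← Nat.sub_add_cancel hl, pow_add, mul_assoc, ← mul_pow, hε, one_pow, mul_one,
      Nat.add_sub_cancel]
  rw [mul_sub, mul_one, map_sub, coeff_mul, Nat.sum_antidiagonal_eq_sum_range_succ_mk,
    sum_range_succ, weightedSum_apply, mul_sum]
  simp only [coeff_divSeries, coeff_mk, Nat.sub_self, pow_zero, mul_one, add_sub_cancel_right]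
  refine sum_congr rfl fun l hl => ?_
  rw [twist (mem_range.1 hl).le]
  ring

theorem sum_weightedSum_onesSum_div_sub {ε : ℝ} (hε : ε * ε = 1) (d k : ℕ) :
    ∑ m ∈ range k, ε ^ m * weightedSum ε 1 (onesSum d) m / (k - m) =
      (d + 2) * (ε ^ k * weightedSum ε 1 (onesSum (d + 1)) k) := by
  have product : divSeries (onesSum d) * (.mk (ε ^ ·) - 1) * divSeries 1 =
      ((d : ℝ) + 2) • (divSeries (onesSum (d + 1)) * (.mk (ε ^ ·) - 1)) := by
    rw [mul_right_comm, divSeries_onesSum_mul, smul_mul_assoc]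
  have coeffs := congrArg (coeff k) product
  rw [coeff_mul, Nat.sum_antidiagonal_eq_sum_range_succ_mk, sum_range_succ, map_smul,
    smul_eq_mul] at coeffs
  rw [← coeff_divSeries_mul_geometric hε, ← coeffs]
  simp only [coeff_divSeries_mul_geometric hε, coeff_divSeries, Nat.sub_self, Nat.cast_zero,
    div_zero, mul_zero, add_zero, Pi.one_apply, mul_one_div]
  exact sum_congr rfl fun m hm => by rw [Nat.cast_sub (mem_range.1 hm).le]

end GeneratingFunctions

section PartialFractions

open Filter Topology

theorem hasSum_sub_add_of_antitone {f : ℕ → ℝ} (hf : Antitone f) (hf₀ : Tendsto f atTop (𝓝 0))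
    (m : ℕ) : HasSum (fun j => f j - f (m + j)) (∑ i ∈ range m, f i) := by
  rw [hasSum_iff_tendsto_nat_of_nonneg fun j => sub_nonneg.2 (hf (Nat.le_add_left j m))]
  have telescope (n : ℕ) : ∑ j ∈ range n, (f j - f (m + j)) =
      ∑ i ∈ range m, f i - ∑ i ∈ range m, f (n + i) := by
    rw [sum_sub_distrib]
    have comm := sum_range_add f n m
    rw [add_comm n m, sum_range_add] at comm
    linarith
  have tail : Tendsto (fun n => ∑ i ∈ range m, f (n + i)) atTop (𝓝 0) := by
    simpa using tendsto_finsetSum (range m) fun i _ => hf₀.comp (tendsto_add_atTop_nat i)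
  simpa [telescope] using tail.const_sub (∑ i ∈ range m, f i)

theorem hasSum_inv_mul_inv_harmonic {m : ℕ} (hm : m ≠ 0) :
    HasSum (fun j : ℕ => 1 / (((m : ℝ) + j + 1) * (j + 1))) (harmonic m / m) := by
  have base : HasSum (fun j : ℕ => 1 / ((j : ℝ) + 1) - 1 / (((m + j : ℕ) : ℝ) + 1))
      (harmonic m) := by
    convert hasSum_sub_add_of_antitone (f := fun j : ℕ => 1 / ((j : ℝ) + 1))
      (fun _ _ h => Nat.one_div_le_one_div h) tendsto_one_div_add_atTop_nhds_zero_nat m using 1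
    simp [harmonic]
  refine (base.div_const (m : ℝ)).congr_fun fun j => ?_
  have : (j : ℝ) + 1 ≠ 0 := by positivity
  have : (m : ℝ) + j + 1 ≠ 0 := by positivity
  push_cast
  field_simp
  ring

theorem hasSum_sum_range_of_hasSum_prod {f : ℕ × ℕ → ℝ} {X : ℝ} (hf : HasSum f X) :
    HasSum (fun k => ∑ m ∈ range k, f (m, k - 1 - m)) X := by
  have antidiagonals := (HasAntidiagonal.sigmaAntidiagonalEquivProd.hasSum_iff.2 hf).sigma
    fun _ => hasSum_fintype _
  rw [← hasSum_nat_add_iff' 1]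
  simp only [sum_range_one, range_zero, sum_empty, sub_zero, Nat.add_sub_cancel]
  refine antidiagonals.congr_fun fun n => ?_
  rw [← Nat.sum_antidiagonal_eq_sum_range_succ_mk f, ← sum_coe_sort]
  rfl

theorem hasSum_mul_inv_mul_inv_harmonic {c : ℕ → ℝ} (hc : c 0 = 0) (m : ℕ) :
    HasSum (fun j : ℕ => c m * (1 / (((m : ℝ) + j + 1) * (j + 1)))) (c m / m * harmonic m) := by
  rcases eq_or_ne m 0 with rfl | hm
  · simp [hc]
  · rw [div_mul_eq_mul_div, mul_div_assoc]
    exact (hasSum_inv_mul_inv_harmonic hm).mul_left (c m)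

theorem summable_mul_inv_mul_inv {c : ℕ → ℝ} (hc : c 0 = 0)
    (hs : Summable fun m : ℕ => c m / m * harmonic m) :
    Summable fun p : ℕ × ℕ => c p.1 * (1 / (((p.1 : ℝ) + p.2 + 1) * (p.2 + 1))) := by
  have fiber := hasSum_mul_inv_mul_inv_harmonic (c := fun m => |c m|) (by simp [hc])
  have harmonic_nonneg (m : ℕ) : (0 : ℝ) ≤ harmonic m :=
    Rat.cast_nonneg.2 (sum_nonneg fun i _ => by positivity)
  have abs_term (m j : ℕ) : |c m * (1 / (((m : ℝ) + j + 1) * (j + 1)))| =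
      |c m| * (1 / (((m : ℝ) + j + 1) * (j + 1))) := by
    rw [abs_mul, abs_of_nonneg (a := 1 / _) (by positivity)]
  rw [← summable_abs_iff, summable_prod_of_nonneg fun _ => abs_nonneg _]
  simp only [abs_term]
  refine ⟨fun m => (fiber m).summable, hs.abs.congr fun m => ?_⟩
  rw [(fiber m).tsum_eq, abs_mul, abs_div, Nat.abs_cast, abs_of_nonneg (harmonic_nonneg m)]

theorem hasSum_sum_div_mul_sub {c : ℕ → ℝ} {X : ℝ} (hc : c 0 = 0)
    (hX : HasSum (fun m : ℕ => c m / m * harmonic m) X) :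
    HasSum (fun k : ℕ => ∑ m ∈ range k, c m / (k * (k - m))) X := by
  have double_sum := (summable_mul_inv_mul_inv hc hX.summable).hasSum
  rw [← hX.unique (double_sum.prod_fiberwise (hasSum_mul_inv_mul_inv_harmonic hc))] at double_sum
  refine (hasSum_sum_range_of_hasSum_prod double_sum).congr_fun fun k =>
    sum_congr rfl fun m hm => ?_
  obtain ⟨j, rfl⟩ := Nat.exists_eq_add_of_lt (mem_range.1 hm)
  rw [show m + j + 1 - 1 - m = j by omega]
  push_cast
  ring_nf

theorem sum_one_div_pow_mul_one_div_pow {K : Type*} [Field K] (r : ℕ) {x y : K} (hx : x ≠ 0)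
    (hy : y ≠ 0) (hxy : x ≠ y) :
    ∑ a ∈ Icc 2 (r + 1), 1 / x ^ a * (1 / y ^ (r + 2 - a)) =
      1 / y ^ r * (1 / (x * (x - y))) - 1 / (x ^ (r + 1) * (x - y)) := by
  have hxy' : x - y ≠ 0 := sub_ne_zero.2 hxy
  induction r with
  | zero => simp
  | succ r ih =>
    have shift : ∑ a ∈ Icc 2 (r + 1), 1 / x ^ a * (1 / y ^ (r + 1 + 2 - a)) =
        1 / y * ∑ a ∈ Icc 2 (r + 1), 1 / x ^ a * (1 / y ^ (r + 2 - a)) := by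
      rw [mul_sum]
      refine sum_congr rfl fun a ha => ?_
      rw [show r + 1 + 2 - a = r + 2 - a + 1 by grind, pow_succ]
      field_simp
    rw [sum_Icc_succ_top (by omega), shift, ih, show r + 1 + 2 - (r + 1 + 1) = 1 by omega]
    field_simp
    ring

theorem sum_one_div_pow_mul_sum_div_pow {g : ℕ → ℝ} (hg : g 0 = 0) (r k : ℕ) :
    ∑ a ∈ Icc 2 (r + 1), 1 / (k : ℝ) ^ a * ∑ m ∈ range k, g m / (m : ℝ) ^ (r + 2 - a) =
      ∑ m ∈ range k, g m / (m : ℝ) ^ r / (k * (k - m)) -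
        (∑ m ∈ range k, g m / (k - m)) / (k : ℝ) ^ (r + 1) := by
  simp only [mul_sum, sum_div]
  rw [sum_comm, ← sum_sub_distrib]
  refine sum_congr rfl fun m hm => ?_
  rcases eq_or_ne m 0 with rfl | hm₀
  · simp [hg]
  have hmk : m < k := mem_range.1 hm
  calc ∑ a ∈ Icc 2 (r + 1), 1 / (k : ℝ) ^ a * (g m / (m : ℝ) ^ (r + 2 - a))
      = g m * ∑ a ∈ Icc 2 (r + 1), 1 / (k : ℝ) ^ a * (1 / (m : ℝ) ^ (r + 2 - a)) := by
        rw [mul_sum]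
        exact sum_congr rfl fun a _ => by ring
    _ = g m / (m : ℝ) ^ r / (k * (k - m)) - g m / (k - m) / (k : ℝ) ^ (r + 1) := by
        rw [sum_one_div_pow_mul_one_div_pow r (Nat.cast_ne_zero.2 hmk.ne_bot)
          (Nat.cast_ne_zero.2 hm₀) (Nat.cast_injective.ne hmk.ne')]
        simp only [div_eq_mul_inv, mul_inv]
        ring

theorem hasSum_sum_one_div_pow_mul_sum_div_pow {g : ℕ → ℝ} (hg : g 0 = 0) {r : ℕ} {X Y : ℝ}
    (hX : HasSum (fun m : ℕ => g m / (m : ℝ) ^ (r + 1) * harmonic m) X)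
    (hY : HasSum (fun k : ℕ => (∑ m ∈ range k, g m / (k - m)) / (k : ℝ) ^ (r + 1)) Y) :
    HasSum (fun k : ℕ => ∑ a ∈ Icc 2 (r + 1),
      1 / (k : ℝ) ^ a * ∑ m ∈ range k, g m / (m : ℝ) ^ (r + 2 - a)) (X - Y) := by
  simp only [sum_one_div_pow_mul_sum_div_pow hg]
  refine (hasSum_sum_div_mul_sub (by simp [hg]) ?_).sub hY
  simpa only [div_div, ← pow_succ] using hX

end PartialFractions

section SumFormula

theorem hasSum_sum_weightedSum_weightedSum_onesSum {ε : ℝ} (hε : ε * ε = 1) (d r : ℕ)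
    {A B C D : ℝ} {E : ℕ → ℝ}
    (hA : HasSum (fun k : ℕ => ε ^ k / (k : ℝ) ^ (r + 1) *
      weightedSum 1 1 (weightedSum ε 1 (onesSum d)) k) A)
    (hB : HasSum (fun k : ℕ => ε ^ k / (k : ℝ) ^ (r + 1) *
      weightedSum ε 1 (onesSum (d + 1)) k) B)
    (hC : HasSum (fun k : ℕ => ε ^ k / (k : ℝ) ^ (r + 2) * weightedSum ε 1 (onesSum d) k) C)
    (hD : HasSum (fun k : ℕ => ε ^ k / (k : ℝ) ^ (r + 1) * weightedSum ε 2 (onesSum d) k) D)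
    (hE : ∀ j ∈ range d, HasSum (fun k : ℕ => ε ^ k / (k : ℝ) ^ (r + 1) *
      weightedSum ε 1 (onesTwoSum d j) k) (E j)) :
    HasSum (fun k : ℕ => ∑ a ∈ Icc 2 (r + 1),
      1 / (k : ℝ) ^ a * weightedSum ε (r + 2 - a) (weightedSum ε 1 (onesSum d)) k)
      (A - B + C + D + ∑ j ∈ range d, E j) := by
  let g (m : ℕ) : ℝ := ε ^ m * weightedSum ε 1 (onesSum d) m
  have shuffle : HasSum (fun m : ℕ => g m / (m : ℝ) ^ (r + 1) * harmonic m)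
      (A + (d + 1) * B + C + D + ∑ j ∈ range d, E j) := by
    refine ((((hA.add (hB.mul_left _)).add hC).add hD).add (hasSum_sum hE)).congr_fun fun m => ?_
    rw [← mul_sum]
    linear_combination ε ^ m / (m : ℝ) ^ (r + 1) * harmonic_mul_weightedSum_onesSum ε d m
  have convolution : HasSum (fun k : ℕ => (∑ m ∈ range k, g m / (k - m)) / (k : ℝ) ^ (r + 1))
      ((d + 2) * B) := by
    refine (hB.mul_left _).congr_fun fun k => ?_
    rw [sum_weightedSum_onesSum_div_sub hε]
    ring
  have combined := hasSum_sum_one_div_pow_mul_sum_div_pow (by simp [g, weightedSum_apply])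
    shuffle convolution
  convert combined using 1
  · simp only [g, weightedSum_apply _ (_ - _), div_mul_eq_mul_div]
  · ring

theorem sum_a_bbar_onebar_ones_general (q d : ℕ) (hq : 2 ≤ q) (ε : ℤ) (hε : IsUnit ε) :
    (∑ a ∈ Icc 2 q,
        eulerSum
          (fun n : Fin (d + 3) => if (n : ℕ) = 0 then a else if (n : ℕ) = 1 then q + 1 - a else 1)
          (fun n : Fin (d + 3) => if (n : ℕ) = 1 ∨ (n : ℕ) = 2 then ε else 1)) =
      eulerSum (fun n : Fin (d + 3) => if (n : ℕ) = 0 then q else 1)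
          (fun n : Fin (d + 3) => if (n : ℕ) = 0 ∨ (n : ℕ) = 2 then ε else 1) -
        eulerSum (fun n : Fin (d + 3) => if (n : ℕ) = 0 then q else 1)
          (fun n : Fin (d + 3) => if (n : ℕ) = 0 ∨ (n : ℕ) = 1 then ε else 1) +
        eulerSum (fun n : Fin (d + 2) => if (n : ℕ) = 0 then q + 1 else 1)
          (fun n : Fin (d + 2) => if (n : ℕ) = 0 ∨ (n : ℕ) = 1 then ε else 1) +
        eulerSum (fun n : Fin (d + 2) => if (n : ℕ) = 0 then q else if (n : ℕ) = 1 then 2 else 1)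
          (fun n : Fin (d + 2) => if (n : ℕ) = 0 ∨ (n : ℕ) = 1 then ε else 1) +
        ∑ j ∈ Icc 1 d, eulerSum
          (fun n : Fin (d + 2) => if (n : ℕ) = 0 then q else if (n : ℕ) = j + 1 then 2 else 1)
          (fun n : Fin (d + 2) => if (n : ℕ) = 0 ∨ (n : ℕ) = 1 then ε else 1) := by
  obtain ⟨r, rfl⟩ : ∃ r, q = r + 1 := ⟨q - 1, by omega⟩
  have hε' : (ε : ℝ) * ε = 1 := mod_cast Int.isUnit_mul_self hε
  have hμ (p : Prop) [Decidable p] : |if p then ε else 1| ≤ 1 := by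
    split_ifs <;> simp [Int.isUnit_iff_abs_eq.1 hε]
  have shift (f : ℕ → ℝ) : ∑ j ∈ Icc 1 d, f j = ∑ j ∈ range d, f (j + 1) := by
    rw [← Ico_add_one_right_eq_Icc, range_eq_Ico, sum_Ico_add']
  rw [shift]
  refine (hasSum_sum fun a ha => have bounds := mem_Icc.1 ha; ?_).unique
    (hasSum_sum_weightedSum_weightedSum_onesSum hε' d r ?_ ?_ ?_ ?_ fun j _ => ?_)
  all_goals
    refine (hasSum_eulerSum (fun i => by split_ifs <;> omega) (by simp <;> omega) fun _ => hμ _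
      ).congr_fun fun k => ?_
    simp [truncatedEulerSum, onesSum, onesTwoSum, Fin.tail_def]

end SumFormula

theorem sum_a_bbar_onebar_ones (u d : ℕ) (hu : 3 ≤ u) (q : ℕ) (hq : q = u - 1) :
    -- Σ_{a+b=u, a≥2, b≥1} ζ(a, b̄, 1̄, 1_d)
    (∑ a ∈ Finset.Icc 2 (u - 1),
        eulerSum
          (fun n : Fin (d + 3) => if (n : ℕ) = 0 then a else if (n : ℕ) = 1 then u - a else 1)
          (fun n : Fin (d + 3) => if (n : ℕ) = 1 ∨ (n : ℕ) = 2 then -1 else 1))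
    =
    -- ζ(q̄, 1, 1̄, 1_d)
    eulerSum (fun n : Fin (d + 3) => if (n : ℕ) = 0 then q else 1)
        (fun n : Fin (d + 3) => if (n : ℕ) = 0 ∨ (n : ℕ) = 2 then -1 else 1)
    -- − ζ(q̄, 1̄, 1, 1_d)
    - eulerSum (fun n : Fin (d + 3) => if (n : ℕ) = 0 then q else 1)
        (fun n : Fin (d + 3) => if (n : ℕ) = 0 ∨ (n : ℕ) = 1 then -1 else 1)
    -- + ζ(ū, 1̄, 1_d)
    + eulerSum (fun n : Fin (d + 2) => if (n : ℕ) = 0 then u else 1)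
        (fun n : Fin (d + 2) => if (n : ℕ) = 0 ∨ (n : ℕ) = 1 then -1 else 1)
    -- + ζ(q̄, 2̄, 1_d)
    + eulerSum (fun n : Fin (d + 2) => if (n : ℕ) = 0 then q else if (n : ℕ) = 1 then 2 else 1)
        (fun n : Fin (d + 2) => if (n : ℕ) = 0 ∨ (n : ℕ) = 1 then -1 else 1)
    -- + Σ_{j=1}^{d} ζ(q̄, 1̄, 1_{j−1}, 2, 1_{d−j})
    + ∑ j ∈ Finset.Icc 1 d,
        eulerSum
          (fun n : Fin (d + 2) => if (n : ℕ) = 0 then q else if (n : ℕ) = j + 1 then 2 else 1)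
          (fun n : Fin (d + 2) => if (n : ℕ) = 0 ∨ (n : ℕ) = 1 then -1 else 1) := by
  obtain rfl : u = q + 1 := by omega
  exact sum_a_bbar_onebar_ones_general q d (by omega) (-1) isUnit_one.neg
end

section
/- Let u ≥ 4 and d ≥ 0 be integers, q = u−1 and p = u−2. Then Σ_{a+b=u, a≥2, b≥1} (a−1)·ζ(a,b,1_d) = ζ(u,1_d) + ζ(2,p,1_d) − p(d+1)·ζ(q,1_{d+1}) + Σ_{j=0}^{d−1} [ ζ(p,1_j,3,1_{d−1−j}) − (d−j)·ζ(p,1_j,2,1_{d−j}) ]. -/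
/-- The multiple zeta value `ζ(s₁,…,s_d) = Σ_{k₁>⋯>k_d≥1} 1/(k₁^{s₁}⋯k_d^{s_d})`. -/
noncomputable def mzv {d : ℕ} (s : Fin d → ℕ) : ℝ :=
  ∑' k : {k : Fin d → ℕ // StrictAnti k ∧ ∀ i, 0 < k i},
    ∏ i, (1 : ℝ) / (k.1 i : ℝ) ^ s i

/-!
The product `ζ(2) ζ(p, 1_d)` is expanded in two ways. The stuffle product merges the two nested
sums: the new summation variable lies between two old ones or coincides with one of them. At the
level of truncated sums this is an induction on the truncation point. The shuffle product
multiplies the polylogarithms `Li_s(X) = ∑ X^{k₁}/(k₁^{s₁}⋯k_d^{s_d})`, obtained from `1` by the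
integrals `∫ f dX/X` and `∫ f dX/(1 - X)`. Integration by parts for these operators amounts to
the partial fractions `1/(ij) = (1/i + 1/j)/(i + j)` on coefficients, so products of polylogarithms
can be computed as formal power series, and only the result has to be summed at `X = 1`. Equating
the two expansions gives the formula, the terms `ζ(p, 1_j, 2, 1_{d-j})` of both being combined.

All series converge because a truncated sum with positive exponents is `O(√N)`.
-/

section RotaBaxter

open PowerSeries
open Finset.HasAntidiagonal (antidiagonal mem_antidiagonal)

variable {K : Type*} [Field K]

/-- The integral `f ↦ ∫ f dX/X` of formal power series, the operator of the letter `x` of the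
shuffle algebra. The constant term of `f` is dropped, by the convention `0 / 0 = 0`. -/
noncomputable def eulerInt : Module.End K K⟦X⟧ where
  toFun f := mk fun n => coeff n f / n
  map_add' f g := by ext n; simp [add_div]
  map_smul' c f := by ext n; simp [mul_div_assoc]

/-- The integral `f ↦ ∫ f dX/(1 - X)` of formal power series, the operator of the letter `y` of the
shuffle algebra, written with `1 / (1 - X) = ∑ Xⁿ = mk 1`. -/
noncomputable def geomInt : Module.End K K⟦X⟧ :=
  eulerInt ∘ₗ LinearMap.mulLeft K (X * mk 1)

lemma coeff_eulerInt (n : ℕ) (f : K⟦X⟧) : coeff n (eulerInt f) = coeff n f / n := by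
  simp [eulerInt]

lemma geomInt_apply (f : K⟦X⟧) : geomInt f = eulerInt (X * mk 1 * f) := rfl

lemma coeff_geomInt (n : ℕ) (f : K⟦X⟧) :
    coeff n (geomInt f) = (∑ m ∈ Finset.range n, coeff m f) / n := by
  rw [geomInt_apply, coeff_eulerInt]
  cases n with
  | zero => simp
  | succ n =>
    rw [mul_assoc, coeff_succ_X_mul, mul_comm, coeff_mul,
      Finset.Nat.sum_antidiagonal_eq_sum_range_succ_mk]
    simp

lemma constantCoeff_eulerInt (f : K⟦X⟧) : constantCoeff (eulerInt f) = 0 := by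
  rw [← coeff_zero_eq_constantCoeff_apply, coeff_eulerInt, Nat.cast_zero, div_zero]

lemma constantCoeff_eulerInt_pow_geomInt (k : ℕ) (f : K⟦X⟧) :
    constantCoeff ((eulerInt ^ k) (geomInt f)) = 0 := by
  cases k with
  | zero => exact constantCoeff_eulerInt _
  | succ k => rw [pow_succ', Module.End.mul_apply, constantCoeff_eulerInt]

variable [CharZero K]

lemma eulerInt_mul_eulerInt {f g : K⟦X⟧} (hf : constantCoeff f = 0) (hg : constantCoeff g = 0) :
    eulerInt f * eulerInt g = eulerInt (f * eulerInt g) + eulerInt (eulerInt f * g) := by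
  ext n
  simp only [map_add, coeff_eulerInt, coeff_mul, Finset.sum_div, ← Finset.sum_add_distrib]
  refine Finset.sum_congr rfl fun ⟨i, j⟩ hij => ?_
  rw [mem_antidiagonal] at hij
  subst hij
  rcases i.eq_zero_or_pos with rfl | hi
  · simp [hf]
  rcases j.eq_zero_or_pos with rfl | hj
  · simp [hg]
  have hi' : (i : K) ≠ 0 := by exact_mod_cast hi.ne'
  have hj' : (j : K) ≠ 0 := by exact_mod_cast hj.ne'
  have hij' : (i + j : K) ≠ 0 := by exact_mod_cast (Nat.add_pos_left hi j).ne'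
  push_cast
  field_simp

lemma geomInt_mul_eulerInt (f : K⟦X⟧) {g : K⟦X⟧} (hg : constantCoeff g = 0) :
    geomInt f * eulerInt g = geomInt (f * eulerInt g) + eulerInt (geomInt f * g) := by
  simp only [geomInt_apply]
  rw [eulerInt_mul_eulerInt (by simp) hg, mul_assoc _ f]

lemma geomInt_mul_geomInt (f g : K⟦X⟧) :
    geomInt f * geomInt g = geomInt (f * geomInt g) + geomInt (geomInt f * g) := by
  rw [geomInt_apply g, geomInt_mul_eulerInt f (by simp), mul_left_comm,
    ← geomInt_apply (geomInt f * g)]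

lemma geomInt_one_mul (k : ℕ) (f : K⟦X⟧) :
    geomInt 1 * (eulerInt ^ k) (geomInt f) =
      ∑ p ∈ antidiagonal k, (eulerInt ^ p.1) (geomInt ((eulerInt ^ p.2) (geomInt f)))
      + (eulerInt ^ k) (geomInt (geomInt 1 * f)) := by
  induction k with
  | zero => simp [geomInt_mul_geomInt]
  | succ k ih =>
    rw [pow_succ', Module.End.mul_apply,
      geomInt_mul_eulerInt 1 (constantCoeff_eulerInt_pow_geomInt k f), ih,
      Finset.Nat.sum_antidiagonal_succ]
    simp only [one_mul, map_add, map_sum, pow_succ', Module.End.mul_apply, pow_zero,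
      Module.End.one_apply, add_assoc]

lemma eulerInt_geomInt_one_mul (k : ℕ) (f : K⟦X⟧) :
    eulerInt (geomInt 1) * (eulerInt ^ k) (geomInt f) =
      ∑ p ∈ antidiagonal k,
        (p.1 + 1 : K) • (eulerInt ^ (p.1 + 1)) (geomInt ((eulerInt ^ p.2) (geomInt f)))
      + (k + 1 : K) • (eulerInt ^ (k + 1)) (geomInt (geomInt 1 * f))
      + (eulerInt ^ k) (geomInt (eulerInt (geomInt 1) * f)) := by
  have hy (f : K⟦X⟧) : constantCoeff (geomInt f) = 0 := constantCoeff_eulerInt_pow_geomInt 0 f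
  induction k with
  | zero =>
    have hyy : geomInt f * geomInt 1 = geomInt (geomInt f) + geomInt (geomInt 1 * f) := by
      rw [mul_comm, geomInt_mul_geomInt, one_mul]
    rw [pow_zero, Module.End.one_apply, mul_comm, geomInt_mul_eulerInt f (hy 1), hyy, mul_comm f]
    simp [add_comm]
  | succ k ih =>
    have hsum (F : ℕ × ℕ → K⟦X⟧) : ∑ p ∈ antidiagonal (k + 1), (p.1 + 1 : K) • F p =
        ∑ p ∈ antidiagonal (k + 1), F p
        + ∑ p ∈ antidiagonal k, (p.1 + 1 : K) • F (p.1 + 1, p.2) := by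
      simp only [add_smul, one_smul, Finset.sum_add_distrib, Finset.Nat.sum_antidiagonal_succ,
        Nat.cast_zero, zero_smul, zero_add, Nat.cast_succ]
      abel
    rw [hsum, pow_succ' eulerInt k, Module.End.mul_apply,
      eulerInt_mul_eulerInt (hy 1) (constantCoeff_eulerInt_pow_geomInt k f), ih,
      ← Module.End.mul_apply eulerInt (eulerInt ^ k), ← pow_succ', geomInt_one_mul]
    simp only [map_add, map_sum, map_smul, pow_succ' eulerInt, Module.End.mul_apply]
    push_cast
    module

end RotaBaxter

section TruncatedSums

open Finset

/-- The truncated multiple zeta value `∑ 1/(k₁^{s₁}⋯k_d^{s_d})` over `N > k₁ > ⋯ > k_d ≥ 0`. Terms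
with `k_d = 0` vanish as soon as `s_d` is positive, by the convention `1 / 0 = 0`. -/
noncomputable def truncMzv : List ℕ → ℕ → ℝ
  | [], _ => 1
  | a :: t, N => ∑ k ∈ range N, truncMzv t k / (k : ℝ) ^ a

lemma truncMzv_nil (N : ℕ) : truncMzv [] N = 1 := rfl

lemma truncMzv_cons (a : ℕ) (t : List ℕ) (N : ℕ) :
    truncMzv (a :: t) N = ∑ k ∈ range N, truncMzv t k / (k : ℝ) ^ a := rfl

lemma truncMzv_cons_succ (a : ℕ) (t : List ℕ) (N : ℕ) :
    truncMzv (a :: t) (N + 1) = truncMzv (a :: t) N + truncMzv t N / (N : ℝ) ^ a :=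
  sum_range_succ _ N

lemma truncMzv_nonneg (s : List ℕ) (N : ℕ) : 0 ≤ truncMzv s N := by
  induction s generalizing N with
  | nil => exact zero_le_one
  | cons a t ih => exact sum_nonneg fun k _ => div_nonneg (ih k) (by positivity)

lemma truncMzv_singleton_mul (r : ℕ) (s : List ℕ) (N : ℕ) :
    truncMzv [r] N * truncMzv s N =
      ∑ i ∈ range (s.length + 1), truncMzv (s.insertIdx i r) N
      + ∑ i ∈ range s.length, truncMzv (s.modify i (· + r)) N := by
  induction s generalizing N with
  | nil => simp [truncMzv_nil]
  | cons a t ih =>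
    rw [List.length_cons, sum_range_succ' _ (t.length + 1),
      sum_range_succ' (fun i => truncMzv ((a :: t).modify i (· + r)) N)]
    simp only [List.insertIdx_succ_cons, List.insertIdx_zero, List.modify_succ_cons,
      List.modify_zero_cons]
    induction N with
    | zero => simp [truncMzv_cons]
    | succ N ihN =>
      simp only [truncMzv_cons_succ, sum_add_distrib, ← sum_div, truncMzv_nil, pow_add]
      linear_combination ihN + ih N / (N : ℝ) ^ a

end TruncatedSums

section Convergence

open Finset

lemma sum_range_sqrt_div_self_le (N : ℕ) : ∑ k ∈ range N, √(k : ℝ) / k ≤ 2 * √N := by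
  have hincrement (n : ℕ) : √(n + 1 : ℝ) / (n + 1) ≤ 2 * (√(n + 1) - √n) := by
    have hpos : 0 < √(n + 1 : ℝ) := by positivity
    have hsq : √(n + 1 : ℝ) ^ 2 = n + 1 := Real.sq_sqrt (by positivity)
    have hsq' : √(n : ℝ) ^ 2 = n := Real.sq_sqrt (by positivity)
    rw [Real.sqrt_div_self, inv_le_iff_one_le_mul₀ hpos]
    nlinarith [sq_nonneg (√(n + 1 : ℝ) - √n)]
  cases N with
  | zero => simp
  | succ N =>
    calc ∑ k ∈ range (N + 1), √(k : ℝ) / k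
        ≤ ∑ k ∈ range N, 2 * (√((k + 1 : ℕ) : ℝ) - √(k : ℝ)) := by
          rw [sum_range_succ', Nat.cast_zero, div_zero, add_zero]
          exact sum_le_sum fun k _ => by exact_mod_cast hincrement k
      _ = 2 * √(N : ℝ) := by
          rw [← mul_sum, sum_range_sub (fun k : ℕ => √(k : ℝ)), Nat.cast_zero, Real.sqrt_zero,
            sub_zero]
      _ ≤ 2 * √((N + 1 : ℕ) : ℝ) := by gcongr; exact N.le_succ

lemma truncMzv_le {s : List ℕ} (hs : ∀ b ∈ s, 0 < b) {N : ℕ} (hN : 0 < N) :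
    truncMzv s N ≤ 2 ^ s.length * √N := by
  induction s generalizing N with
  | nil => simpa [truncMzv_nil, Nat.one_le_iff_ne_zero] using hN.ne'
  | cons a t ih =>
    obtain ⟨ha, ht⟩ := List.forall_mem_cons.1 hs
    have hterm (k : ℕ) : truncMzv t k / (k : ℝ) ^ a ≤ 2 ^ t.length * (√(k : ℝ) / k) := by
      rcases k.eq_zero_or_pos with rfl | hk
      · simp [ha.ne']
      · rw [← mul_div_assoc]
        have hk' : (1 : ℝ) ≤ k := by exact_mod_cast hk
        gcongr
        · exact ih ht hk
        · exact le_self_pow₀ hk' ha.ne'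
    calc truncMzv (a :: t) N
        ≤ ∑ k ∈ range N, 2 ^ t.length * (√(k : ℝ) / k) := sum_le_sum fun k _ => hterm k
      _ = 2 ^ t.length * ∑ k ∈ range N, √(k : ℝ) / k := by rw [mul_sum]
      _ ≤ 2 ^ t.length * (2 * √N) := by gcongr; exact sum_range_sqrt_div_self_le N
      _ = 2 ^ (a :: t).length * √N := by rw [List.length_cons, pow_succ, mul_assoc]

/-- An index of a convergent multiple zeta value. -/
def IsAdmissible : List ℕ → Prop
  | [] => True
  | a :: t => 2 ≤ a ∧ ∀ b ∈ t, 0 < b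

lemma IsAdmissible.pos {s : List ℕ} (hs : IsAdmissible s) : ∀ b ∈ s, 0 < b := by
  cases s with
  | nil => simp
  | cons a t => exact List.forall_mem_cons.2 ⟨by grind [IsAdmissible], hs.2⟩

lemma IsAdmissible.insertIdx {s : List ℕ} (hs : IsAdmissible s) {r : ℕ} (hr : 2 ≤ r) (i : ℕ) :
    IsAdmissible (s.insertIdx i r) := by
  cases i with
  | zero => exact ⟨hr, hs.pos⟩
  | succ i =>
    cases s with
    | nil => exact trivial
    | cons a t =>
      refine ⟨hs.1, fun b hb => ?_⟩
      rcases List.eq_or_mem_of_mem_insertIdx hb with rfl | hb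
      · lia
      · exact hs.2 b hb

lemma IsAdmissible.modify_add {s : List ℕ} (hs : IsAdmissible s) (i r : ℕ) :
    IsAdmissible (s.modify i (· + r)) := by
  cases s with
  | nil => simp [IsAdmissible]
  | cons a t =>
    cases i with
    | zero => exact ⟨le_add_right hs.1, hs.2⟩
    | succ i =>
      rw [List.modify_succ_cons]
      refine ⟨hs.1, fun b hb => ?_⟩
      obtain ⟨j, hj, rfl⟩ := List.mem_iff_getElem.1 hb
      rw [List.getElem_modify]
      have := hs.2 (t[j]'(by simpa using hj)) (List.getElem_mem _)
      split_ifs <;> lia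

lemma summable_truncMzv_div_pow {a : ℕ} {t : List ℕ} (h : IsAdmissible (a :: t)) :
    Summable fun n : ℕ => truncMzv t n / (n : ℝ) ^ a := by
  have hdom : Summable fun n : ℕ => 2 ^ t.length * (1 / (n : ℝ) ^ (3 / 2 : ℝ)) :=
    (Real.summable_one_div_nat_rpow.2 (by norm_num)).mul_left _
  refine hdom.of_nonneg_of_le (fun n => div_nonneg (truncMzv_nonneg t n) (by positivity))
    fun n => ?_
  rcases n.eq_zero_or_pos with rfl | hn
  · simp [(two_pos.trans_le h.1).ne']
  have hn' : (1 : ℝ) ≤ n := by exact_mod_cast hn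
  have hpow : (n : ℝ) ^ 2 = (n : ℝ) ^ (3 / 2 : ℝ) * √n := by
    rw [Real.sqrt_eq_rpow, ← Real.rpow_add (by positivity)]
    norm_num
  calc truncMzv t n / (n : ℝ) ^ a
      ≤ 2 ^ t.length * √n / (n : ℝ) ^ 2 := by
        gcongr
        · exact truncMzv_le h.2 hn
        · exact h.1
    _ = 2 ^ t.length * (1 / (n : ℝ) ^ (3 / 2 : ℝ)) := by
        rw [hpow]
        field_simp

lemma IsAdmissible.exists_truncMzv_le {s : List ℕ} (hs : IsAdmissible s) :
    ∃ C, ∀ N, truncMzv s N ≤ C := by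
  cases s with
  | nil => exact ⟨1, fun _ => le_rfl⟩
  | cons a t =>
    exact ⟨_, fun N => (summable_truncMzv_div_pow hs).sum_le_tsum (range N)
      fun n _ => div_nonneg (truncMzv_nonneg t n) (by positivity)⟩

end Convergence

section IteratedSums

open Finset Filter Topology

/-- The strictly decreasing `d`-tuples of positive integers below `N`, over which a truncated
multiple zeta value is summed. -/
def decTuples (d N : ℕ) : Finset (Fin d → ℕ) :=
  {k ∈ Fintype.piFinset fun _ => range N | StrictAnti k ∧ ∀ i, 0 < k i}

lemma mem_decTuples {d N : ℕ} {k : Fin d → ℕ} :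
    k ∈ decTuples d N ↔ (∀ i, k i < N) ∧ StrictAnti k ∧ ∀ i, 0 < k i := by
  simp [decTuples]

lemma cons_mem_decTuples {d N n : ℕ} {k : Fin d → ℕ} :
    (Fin.cons n k : Fin (d + 1) → ℕ) ∈ decTuples (d + 1) N ↔
      n ∈ Ico 1 N ∧ k ∈ decTuples d n := by
  simp only [mem_decTuples, StrictAnti, Fin.forall_fin_succ, Fin.cons_zero, Fin.cons_succ,
    Fin.succ_lt_succ_iff, Fin.succ_pos, Fin.not_lt_zero, lt_irrefl, mem_Ico]
  grind

lemma sum_decTuples_succ {M : Type*} [AddCommMonoid M] {d : ℕ} (N : ℕ)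
    (f : (Fin (d + 1) → ℕ) → M) :
    ∑ k ∈ decTuples (d + 1) N, f k =
      ∑ n ∈ Ico 1 N, ∑ k ∈ decTuples d n, f (Fin.cons n k) := by
  rw [sum_sigma']
  refine sum_nbij' (fun k => ⟨k 0, Fin.tail k⟩) (fun x => Fin.cons x.1 x.2) ?_ ?_ ?_ ?_ ?_
  · intro k hk
    rw [mem_sigma, ← cons_mem_decTuples, Fin.cons_self_tail]
    exact hk
  · intro x hx
    exact cons_mem_decTuples.2 (mem_sigma.1 hx)
  all_goals simp

lemma truncMzv_ofFn {d : ℕ} {s : Fin d → ℕ} (hs : ∀ i, 0 < s i) (N : ℕ) :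
    truncMzv (List.ofFn s) N = ∑ k ∈ decTuples d N, ∏ i, (1 : ℝ) / (k i : ℝ) ^ s i := by
  induction d generalizing N with
  | zero =>
    have : decTuples 0 N = {Fin.elim0} := by
      ext k
      simp [mem_decTuples, Subsingleton.elim k Fin.elim0, Subsingleton.strictAnti]
    simp [this, truncMzv_nil]
  | succ d ih =>
    have hzero : ∀ n ∈ range N, n ∉ Ico 1 N →
        truncMzv (List.ofFn fun i => s i.succ) n / (n : ℝ) ^ s 0 = 0 := by
      intro n hn hn'
      obtain rfl : n = 0 := by grind
      simp [(hs 0).ne']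
    rw [List.ofFn_succ, truncMzv_cons, sum_decTuples_succ,
      ← sum_subset (fun n => by grind) hzero]
    refine sum_congr rfl fun n _ => ?_
    simp only [ih fun i => hs i.succ, Fin.prod_univ_succ, Fin.cons_zero, Fin.cons_succ, ← mul_sum]
    ring

lemma tendsto_truncMzv_ofFn {d : ℕ} {s : Fin d → ℕ} (hs : IsAdmissible (List.ofFn s)) :
    Tendsto (truncMzv (List.ofFn s)) atTop (𝓝 (mzv s)) := by
  classical
  let P (k : Fin d → ℕ) : Prop := StrictAnti k ∧ ∀ i, 0 < k i
  let f (k : Fin d → ℕ) : ℝ := ∏ i, (1 : ℝ) / (k i : ℝ) ^ s i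
  have hsum (N : ℕ) : ∑ k ∈ (decTuples d N).subtype P, f k = truncMzv (List.ofFn s) N := by
    rw [sum_subtype_eq_sum_filter, filter_true_of_mem fun k hk => (mem_decTuples.1 hk).2,
      truncMzv_ofFn fun i => hs.pos _ (List.mem_ofFn.2 ⟨i, rfl⟩)]
  have hexhaust : Tendsto (fun N => (decTuples d N).subtype P) atTop atTop := by
    refine tendsto_atTop_finset_of_monotone (fun M N hMN k hk => ?_) fun k => ?_
    · rw [mem_subtype, mem_decTuples] at hk ⊢
      exact ⟨fun i => (hk.1 i).trans_le hMN, hk.2⟩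
    · obtain ⟨N, hN⟩ := (Set.finite_range k.1).bddAbove
      exact ⟨N + 1, mem_subtype.2 (mem_decTuples.2
        ⟨fun i => Nat.lt_succ_of_le (hN (Set.mem_range_self i)), k.2⟩)⟩
  have hnonneg (k : {k // P k}) : 0 ≤ f k := prod_nonneg fun i _ => by positivity
  have hsummable : Summable fun k : {k // P k} => f k := by
    obtain ⟨C, hC⟩ := hs.exists_truncMzv_le
    refine summable_of_sum_le hnonneg (c := C) fun u => ?_
    obtain ⟨N, hN⟩ := (hexhaust.eventually_ge_atTop u).exists
    exact (sum_le_sum_of_subset_of_nonneg hN fun k _ _ => hnonneg k).trans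
      ((hsum N).trans_le (hC N))
  exact (hsummable.hasSum.comp hexhaust).congr hsum

/-- The multiple zeta value of an index given as a list, which may then be built by list
operations. -/
noncomputable def mzvList (s : List ℕ) : ℝ := mzv s.get

lemma mzv_eq_mzvList {d : ℕ} {s : Fin d → ℕ} {l : List ℕ} (h : List.ofFn s = l) :
    mzv s = mzvList l := by
  obtain rfl : d = l.length := by rw [← h, List.length_ofFn]
  rw [mzvList, ← List.ofFn_injective (h.trans l.ofFn_get.symm)]

lemma IsAdmissible.tendsto_truncMzv {s : List ℕ} (hs : IsAdmissible s) :
    Tendsto (truncMzv s) atTop (𝓝 (mzvList s)) := by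
  rw [← s.ofFn_get] at hs
  simpa only [List.ofFn_get, mzvList] using tendsto_truncMzv_ofFn hs

lemma mzvList_singleton_mul {r : ℕ} (hr : 2 ≤ r) {s : List ℕ} (hs : IsAdmissible s) :
    mzvList [r] * mzvList s =
      ∑ i ∈ range (s.length + 1), mzvList (s.insertIdx i r)
      + ∑ i ∈ range s.length, mzvList (s.modify i (· + r)) := by
  have hr' : IsAdmissible [r] := ⟨hr, by simp⟩
  refine tendsto_nhds_unique
    ((hr'.tendsto_truncMzv.mul hs.tendsto_truncMzv).congr (truncMzv_singleton_mul r s)) ?_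
  exact (tendsto_finsetSum _ fun i _ => (hs.insertIdx hr i).tendsto_truncMzv).add
    (tendsto_finsetSum _ fun i _ => (hs.modify_add i r).tendsto_truncMzv)

end IteratedSums

section Polylog

open PowerSeries
open Finset (range)
open Finset.HasAntidiagonal (antidiagonal)

/-- The multiple polylogarithm `Li_s(X) = ∑ X^{k₁}/(k₁^{s₁}⋯k_d^{s_d})` over `k₁ > ⋯ > k_d`, as a
formal power series. Its value at `X = 1` is the multiple zeta value of `s`. -/
noncomputable def polylog : List ℕ → ℝ⟦X⟧
  | [] => 1
  | a :: t => mk fun n => truncMzv t n / (n : ℝ) ^ a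

lemma coeff_polylog_cons (a : ℕ) (t : List ℕ) (n : ℕ) :
    coeff n (polylog (a :: t)) = truncMzv t n / (n : ℝ) ^ a := by
  rw [polylog, coeff_mk]

lemma sum_coeff_polylog (s : List ℕ) {N : ℕ} (hN : N ≠ 0) :
    ∑ n ∈ range N, coeff n (polylog s) = truncMzv s N := by
  cases s with
  | nil => simp [polylog, coeff_one, truncMzv_nil, hN]
  | cons a t => simp only [coeff_polylog_cons, truncMzv_cons]

lemma geomInt_polylog (s : List ℕ) : geomInt (polylog s) = polylog (1 :: s) := by
  ext n
  rw [coeff_geomInt, coeff_polylog_cons, pow_one]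
  rcases eq_or_ne n 0 with rfl | hn
  · simp
  · rw [sum_coeff_polylog s hn]

lemma eulerInt_polylog_cons (a : ℕ) (t : List ℕ) :
    eulerInt (polylog (a :: t)) = polylog ((a + 1) :: t) := by
  ext n
  rw [coeff_eulerInt, coeff_polylog_cons, coeff_polylog_cons, div_div, pow_succ]

lemma eulerInt_pow_geomInt_polylog (k : ℕ) (t : List ℕ) :
    (eulerInt ^ k) (geomInt (polylog t)) = polylog ((k + 1) :: t) := by
  induction k with
  | zero => exact geomInt_polylog t
  | succ k ih => rw [pow_succ', Module.End.mul_apply, ih, eulerInt_polylog_cons]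

lemma polylog_one_mul_polylog_cons (k : ℕ) (t : List ℕ) :
    polylog [1] * polylog ((k + 1) :: t) =
      ∑ p ∈ antidiagonal k, polylog ((p.1 + 1) :: (p.2 + 1) :: t)
      + (eulerInt ^ k) (geomInt (polylog [1] * polylog t)) := by
  have h := geomInt_one_mul k (polylog t)
  have hone : geomInt 1 = polylog [1] := geomInt_polylog []
  rw [hone] at h
  simpa only [eulerInt_pow_geomInt_polylog] using h

lemma polylog_two_mul_polylog_cons (k : ℕ) (t : List ℕ) :
    polylog [2] * polylog ((k + 1) :: t) =
      ∑ p ∈ antidiagonal k, (p.1 + 1 : ℝ) • polylog ((p.1 + 2) :: (p.2 + 1) :: t)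
      + (k + 1 : ℝ) • (eulerInt ^ (k + 1)) (geomInt (polylog [1] * polylog t))
      + (eulerInt ^ k) (geomInt (polylog [2] * polylog t)) := by
  have h := eulerInt_geomInt_one_mul k (polylog t)
  have hone : geomInt 1 = polylog [1] := geomInt_polylog []
  have htwo : eulerInt (polylog [1]) = polylog [2] := eulerInt_polylog_cons 1 []
  rw [hone, htwo] at h
  simpa only [eulerInt_pow_geomInt_polylog] using h

lemma polylog_one_mul_polylog_ones (m : ℕ) :
    polylog [1] * polylog (List.replicate m 1) =
      (m + 1 : ℝ) • polylog (List.replicate (m + 1) 1) := by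
  induction m with
  | zero => simp [polylog]
  | succ m ih =>
    have h := polylog_one_mul_polylog_cons 0 (List.replicate m 1)
    rw [ih, map_smul, map_smul, eulerInt_pow_geomInt_polylog] at h
    simp only [zero_add, Finset.Nat.antidiagonal_zero, Finset.sum_singleton,
      ← List.replicate_succ] at h
    rw [h]
    push_cast
    module

lemma polylog_two_mul_polylog_ones (m : ℕ) :
    polylog [2] * polylog (List.replicate m 1) =
      ∑ p ∈ antidiagonal m, (p.2 + 1 : ℝ) • polylog ((List.replicate m 1).insertIdx p.1 2) := by
  induction m with
  | zero => simp [polylog]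
  | succ m ih =>
    have h := polylog_two_mul_polylog_cons 0 (List.replicate m 1)
    rw [ih, polylog_one_mul_polylog_ones] at h
    simp only [map_smul, map_sum, eulerInt_pow_geomInt_polylog, zero_add,
      Finset.Nat.antidiagonal_zero, Finset.sum_singleton, ← List.replicate_succ] at h
    rw [h, Finset.Nat.sum_antidiagonal_succ]
    simp only [List.replicate_succ, List.insertIdx_zero, List.insertIdx_succ_cons]
    push_cast
    module

lemma polylog_two_mul_polylog_cons_ones (k m : ℕ) :
    polylog [2] * polylog ((k + 1) :: List.replicate m 1) =
      ∑ p ∈ antidiagonal k,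
        (p.1 + 1 : ℝ) • polylog ((p.1 + 2) :: (p.2 + 1) :: List.replicate m 1)
      + ((k + 1) * (m + 1) : ℝ) • polylog ((k + 2) :: List.replicate (m + 1) 1)
      + ∑ p ∈ antidiagonal m,
        (p.2 + 1 : ℝ) • polylog ((k + 1) :: (List.replicate m 1).insertIdx p.1 2) := by
  rw [polylog_two_mul_polylog_cons, polylog_one_mul_polylog_ones, polylog_two_mul_polylog_ones]
  simp only [map_smul, map_sum, eulerInt_pow_geomInt_polylog, smul_smul]

lemma IsAdmissible.hasSum_coeff_polylog {s : List ℕ} (hs : IsAdmissible s) :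
    HasSum (fun n => coeff n (polylog s)) (mzvList s) := by
  have hnonneg (n : ℕ) : 0 ≤ coeff n (polylog s) := by
    cases s with
    | nil => simp only [polylog, coeff_one]; positivity
    | cons a t =>
      rw [coeff_polylog_cons]
      exact div_nonneg (truncMzv_nonneg t n) (by positivity)
  refine (hasSum_iff_tendsto_nat_of_nonneg hnonneg _).2 (hs.tendsto_truncMzv.congr' ?_)
  filter_upwards [Filter.eventually_ne_atTop 0] with N hN using (sum_coeff_polylog s hN).symm

lemma hasSum_coeff_mul {R : Type*} [NormedRing R] [CompleteSpace R] {f g : R⟦X⟧}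
    (hf : Summable fun n => ‖coeff n f‖) (hg : Summable fun n => ‖coeff n g‖) :
    HasSum (fun n => coeff n (f * g)) ((∑' n, coeff n f) * ∑' n, coeff n g) := by
  simp only [coeff_mul]
  rw [tsum_mul_tsum_eq_tsum_sum_antidiagonal_of_summable_norm hf hg]
  exact (summable_norm_sum_mul_antidiagonal_of_summable_norm hf hg).of_norm.hasSum

lemma mzvList_two_mul_mzvList_cons_ones {k : ℕ} (hk : 0 < k) (m : ℕ) :
    mzvList [2] * mzvList ((k + 1) :: List.replicate m 1) =
      ∑ p ∈ antidiagonal k,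
        (p.1 + 1 : ℝ) * mzvList ((p.1 + 2) :: (p.2 + 1) :: List.replicate m 1)
      + (k + 1) * (m + 1) * mzvList ((k + 2) :: List.replicate (m + 1) 1)
      + ∑ p ∈ antidiagonal m,
        (p.2 + 1 : ℝ) * mzvList ((k + 1) :: (List.replicate m 1).insertIdx p.1 2) := by
  have h₂ : IsAdmissible [2] := ⟨le_rfl, by simp⟩
  have hones (a m : ℕ) (ha : 2 ≤ a) : IsAdmissible (a :: List.replicate m 1) :=
    ⟨ha, by simp⟩
  have hprod := hasSum_coeff_mul h₂.hasSum_coeff_polylog.summable.norm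
    (hones (k + 1) m (by lia)).hasSum_coeff_polylog.summable.norm
  rw [h₂.hasSum_coeff_polylog.tsum_eq, (hones (k + 1) m (by lia)).hasSum_coeff_polylog.tsum_eq,
    polylog_two_mul_polylog_cons_ones] at hprod
  simp only [map_add, map_sum, map_smul, smul_eq_mul] at hprod
  refine hprod.unique (((hasSum_sum fun p _ => ?_).add ?_).add (hasSum_sum fun p _ => ?_)) <;>
    refine (IsAdmissible.hasSum_coeff_polylog ?_).mul_left _
  · exact ⟨by lia, by simp⟩
  · exact hones (k + 2) (m + 1) (by lia)
  · exact (hones (k + 1) m (by lia)).insertIdx le_rfl (p.1 + 1)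

end Polylog

open Finset in
lemma sum_antidiagonal_mul_mzvList {k : ℕ} (hk : 0 < k) (d : ℕ) :
    ∑ p ∈ HasAntidiagonal.antidiagonal k,
        (p.1 + 1 : ℝ) * mzvList ((p.1 + 2) :: (p.2 + 1) :: List.replicate d 1) =
      mzvList ((k + 3) :: List.replicate d 1) + mzvList (2 :: (k + 1) :: List.replicate d 1)
      - (k + 1) * (d + 1) * mzvList ((k + 2) :: List.replicate (d + 1) 1)
      + ∑ j ∈ range d, (mzvList ((k + 1) :: (List.replicate d 1).modify j (· + 2))
        - (d - j : ℕ) * mzvList ((k + 1) :: (List.replicate d 1).insertIdx j 2)) := by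
  have hstuffle := mzvList_singleton_mul le_rfl
    (show IsAdmissible ((k + 1) :: List.replicate d 1) from ⟨by lia, by simp⟩)
  rw [mzvList_two_mul_mzvList_cons_ones hk, List.length_cons, List.length_replicate,
    sum_range_succ' _ (d + 1), sum_range_succ' (fun i => mzvList (List.modify _ i _)),
    Nat.sum_antidiagonal_eq_sum_range_succ_mk _ d] at hstuffle
  simp only [add_mul, one_mul, sum_add_distrib, List.insertIdx_succ_cons, List.insertIdx_zero,
    List.modify_succ_cons, List.modify_zero_cons] at hstuffle ⊢
  rw [sum_range_succ (fun i => ((d - i : ℕ) : ℝ) * _), Nat.sub_self] at hstuffle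
  rw [sum_sub_distrib]
  push_cast at hstuffle ⊢
  linear_combination hstuffle

lemma mzv_eq_mzvList_cons_ones (a d : ℕ) :
    mzv (fun n : Fin (d + 1) => if (n : ℕ) = 0 then a else 1) =
      mzvList (a :: List.replicate d 1) :=
  mzv_eq_mzvList (by simp [List.ofFn_succ, List.ofFn_const])

lemma mzv_eq_mzvList_cons_cons_ones (a b d : ℕ) :
    mzv (fun n : Fin (d + 2) => if (n : ℕ) = 0 then a else if (n : ℕ) = 1 then b else 1) =
      mzvList (a :: b :: List.replicate d 1) :=
  mzv_eq_mzvList (by simp [List.ofFn_succ, List.ofFn_const])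

lemma mzv_eq_mzvList_cons_insertIdx_ones {d j : ℕ} (hj : j ≤ d) (a c : ℕ) :
    mzv (fun n : Fin (d + 2) =>
        if (n : ℕ) = 0 then a else if (n : ℕ) = j + 1 then c else 1) =
      mzvList (a :: (List.replicate d 1).insertIdx j c) := by
  refine mzv_eq_mzvList (List.ext_getElem (by simp [List.length_insertIdx, hj]) fun i _ _ => ?_)
  cases i with
  | zero => simp
  | succ i =>
    simp only [List.getElem_ofFn, List.getElem_cons_succ, List.getElem_insertIdx,
      List.getElem_replicate]
    grind

lemma mzv_eq_mzvList_cons_modify_ones (a d j : ℕ) {c : ℕ} {f : ℕ → ℕ} (hf : f 1 = c) :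
    mzv (fun n : Fin (d + 1) =>
        if (n : ℕ) = 0 then a else if (n : ℕ) = j + 1 then c else 1) =
      mzvList (a :: (List.replicate d 1).modify j f) := by
  refine mzv_eq_mzvList (List.ext_getElem (by simp) fun i _ _ => ?_)
  subst hf
  cases i <;> simp [List.getElem_modify, eq_comm]

lemma sum_Icc_two_eq_sum_antidiagonal {M : Type*} [AddCommMonoid M] (k : ℕ) (f : ℕ → ℕ → M) :
    ∑ a ∈ Finset.Icc 2 (k + 2), f a (k + 3 - a) =
      ∑ p ∈ Finset.HasAntidiagonal.antidiagonal k, f (p.1 + 2) (p.2 + 1) := by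
  refine Finset.sum_nbij' (fun a => (a - 2, k + 2 - a)) (fun p => p.1 + 2) ?_ ?_ ?_ ?_ ?_ <;>
    grind [Finset.HasAntidiagonal.mem_antidiagonal]

theorem weighted_sum_ab_ones_a (u d : ℕ) (hu : 4 ≤ u)
    (q p : ℕ) (hq : q = u - 1) (hp : p = u - 2) :
    -- Σ_{a+b=u, a≥2, b≥1} (a−1)·ζ(a,b,1_d)
    (∑ a ∈ Finset.Icc 2 (u - 1), ((a : ℝ) - 1) *
        mzv (fun n : Fin (d + 2) =>
          if (n : ℕ) = 0 then a else if (n : ℕ) = 1 then u - a else 1))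
    =
    mzv (fun n : Fin (d + 1) => if (n : ℕ) = 0 then u else 1)
    + mzv (fun n : Fin (d + 2) => if (n : ℕ) = 0 then 2 else if (n : ℕ) = 1 then p else 1)
    - (p : ℝ) * ((d : ℝ) + 1) * mzv (fun n : Fin (d + 2) => if (n : ℕ) = 0 then q else 1)
    + ∑ j ∈ Finset.range d,
        (mzv (fun n : Fin (d + 1) =>
            if (n : ℕ) = 0 then p else if (n : ℕ) = j + 1 then 3 else 1)
         - ((d - j : ℕ) : ℝ) *
            mzv (fun n : Fin (d + 2) =>
              if (n : ℕ) = 0 then p else if (n : ℕ) = j + 1 then 2 else 1)) := by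
  obtain ⟨k, rfl⟩ : ∃ k, u = k + 3 := ⟨u - 3, by lia⟩
  obtain rfl : q = k + 2 := hq
  obtain rfl : p = k + 1 := hp
  have hweight (i : ℕ) : ((i + 2 : ℕ) : ℝ) - 1 = i + 1 := by push_cast; ring
  have hmodify (j : ℕ) := mzv_eq_mzvList_cons_modify_ones (k + 1) d j (f := (· + 2)) (c := 3) rfl
  simp only [mzv_eq_mzvList_cons_cons_ones, mzv_eq_mzvList_cons_ones, hmodify]
  rw [Nat.add_sub_assoc (by norm_num), sum_Icc_two_eq_sum_antidiagonal k fun a b =>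
    ((a : ℝ) - 1) * mzvList (a :: b :: List.replicate d 1)]
  simp only [hweight, sum_antidiagonal_mul_mzvList (by lia : 0 < k)]
  rw [Nat.cast_add_one]
  congr! 3 with j hj
  rw [mzv_eq_mzvList_cons_insertIdx_ones (Finset.mem_range.1 hj).le]
end

section
/- Let w ≥ 4 be an even integer. Then Σ_{a+b+c=w, a≥2, b≥1, c≥1} ((−1)^a + (−1)^b + (−1)^c)·ζ(a,b,c) = (3/2)·ζ(w) − ζ(2)·ζ(w−2). -/
/-!
For even `a + b + c` the sign `(-1) ^ a + (-1) ^ b + (-1) ^ c` is `3` if all three exponents are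
even and `-1` otherwise, so the weighted sum is four times the sum of `ζ(a,b,c)` over even exponents
minus the sum over all exponents. These two sums are `5/8 ζ(w) - 1/4 ζ(2) ζ(w-2)` (Shen-Cai) and
`ζ(w)` (the sum formula).

In both evaluations `1 / (x ^ a * y ^ b * z ^ c)` is summed over the exponents first. This is a
complete homogeneous polynomial, which partial fractions split into three terms, one for each of
the variables that may carry the high power. Calling that variable `k` and the other two `j > l`,
the terms of all `x > y > z` together form one series over `k` and `j > l` with `j, l ≠ k`. It
converges absolutely, and for fixed `k` the sum over `j > l` has a closed form: for even exponents
it is essentially `((∑ g j) ^ 2 - ∑ g j ^ 2) / 2` with `g j = 1 / (j ^ 2 - k ^ 2)`, and for all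
exponents the harmonic numbers in it cancel and leave `1 / k ^ w`.
-/

namespace MultipleZeta

open Filter Topology Finset

/-- The triples `(i, j, l)` with `i + j + l = n`, which index the multiple zeta values of depth `3`
and fixed weight as well as the monomials of the complete homogeneous polynomial of degree `n`. -/
def tripleAntidiagonal (n : ℕ) : Finset (ℕ × ℕ × ℕ) :=
  {s ∈ range (n + 1) ×ˢ range (n + 1) ×ˢ range (n + 1) | s.1 + s.2.1 + s.2.2 = n}

lemma mem_tripleAntidiagonal {n : ℕ} {s : ℕ × ℕ × ℕ} :
    s ∈ tripleAntidiagonal n ↔ s.1 + s.2.1 + s.2.2 = n := by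
  simp only [tripleAntidiagonal, mem_filter, mem_product, mem_range]
  omega

lemma sum_tripleAntidiagonal {M : Type*} [AddCommMonoid M] (f : ℕ → ℕ → ℕ → M) (n : ℕ) :
    ∑ s ∈ tripleAntidiagonal n, f s.1 s.2.1 s.2.2 =
      ∑ p ∈ antidiagonal n, ∑ q ∈ antidiagonal p.2, f p.1 q.1 q.2 := by
  rw [sum_sigma']
  refine sum_bij' (fun s _ ↦ ⟨(s.1, s.2.1 + s.2.2), s.2⟩) (fun t _ ↦ (t.1.1, t.2)) ?_ ?_ ?_ ?_ ?_
  · simp [mem_tripleAntidiagonal, add_assoc]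
  · simp +contextual [mem_tripleAntidiagonal, add_assoc]
  · simp
  · simp +contextual
  · simp

lemma sum_Icc_sum_Icc_eq_sum_tripleAntidiagonal {M : Type*} [AddCommMonoid M]
    (f : ℕ → ℕ → ℕ → M) (m : ℕ) :
    ∑ a ∈ Icc 2 (m + 4 - 2), ∑ b ∈ Icc 1 (m + 4 - a - 1), f a b (m + 4 - a - b) =
      ∑ s ∈ tripleAntidiagonal m, f (s.1 + 2) (s.2.1 + 1) (s.2.2 + 1) := by
  rw [sum_sigma']
  refine sum_bij' (fun t _ ↦ (t.1 - 2, t.2 - 1, m + 4 - t.1 - t.2 - 1))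
    (fun s _ ↦ ⟨s.1 + 2, s.2.1 + 1⟩) ?_ ?_ ?_ ?_ ?_
  · rintro ⟨a, b⟩ h
    simp only [mem_sigma, mem_Icc, mem_tripleAntidiagonal] at h ⊢
    omega
  · rintro ⟨i, j, l⟩ h
    simp only [mem_sigma, mem_Icc, mem_tripleAntidiagonal] at h ⊢
    omega
  · rintro ⟨a, b⟩ h
    simp only [mem_sigma, mem_Icc] at h
    simp only [Sigma.mk.injEq, heq_eq_eq]
    omega
  · rintro ⟨i, j, l⟩ h
    simp only [mem_tripleAntidiagonal] at h
    simp only [Prod.mk.injEq]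
    omega
  · rintro ⟨a, b⟩ h
    simp only [mem_sigma, mem_Icc] at h
    dsimp only
    congr 1 <;> omega

lemma sum_tripleAntidiagonal_ite_even {M : Type*} [AddCommMonoid M] (f : ℕ → ℕ → ℕ → M) (n : ℕ) :
    (∑ s ∈ tripleAntidiagonal (2 * n + 2),
      if Even (s.1 + 2) ∧ Even (s.2.1 + 1) then f (s.1 + 2) (s.2.1 + 1) (s.2.2 + 1) else 0) =
      ∑ s ∈ tripleAntidiagonal n, f (2 * s.1 + 2) (2 * s.2.1 + 2) (2 * s.2.2 + 2) := by
  rw [← sum_filter]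
  refine sum_bij' (fun s _ ↦ (s.1 / 2, s.2.1 / 2, s.2.2 / 2))
    (fun s _ ↦ (2 * s.1, 2 * s.2.1 + 1, 2 * s.2.2 + 1)) ?_ ?_ ?_ ?_ ?_
  all_goals
    rintro ⟨i, j, l⟩ h
    simp only [mem_filter, mem_tripleAntidiagonal, Nat.even_iff, Prod.mk.injEq] at h ⊢
  · omega
  · omega
  · omega
  · omega
  · congr 1 <;> omega

lemma neg_one_pow_add_neg_one_pow_add_neg_one_pow {R : Type*} [Ring R] {a b c : ℕ}
    (h : Even (a + b + c)) :
    (-1 : R) ^ a + (-1) ^ b + (-1) ^ c = 4 * (if Even a ∧ Even b then 1 else 0) - 1 := by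
  have hc : Even c ↔ (Even a ↔ Even b) := by
    rw [Nat.even_add, Nat.even_add] at h
    tauto
  by_cases ha : Even a <;> by_cases hb : Even b <;>
    simp only [ha, hb, iff_true, iff_false, not_true] at hc <;>
    norm_num [neg_one_pow_eq_ite, ha, hb, hc]

lemma sum_tripleAntidiagonal_neg_one_pow_mul {R : Type*} [Ring R] (f : ℕ → ℕ → ℕ → R) {m : ℕ}
    (hm : Even m) :
    ∑ s ∈ tripleAntidiagonal m,
      ((-1) ^ (s.1 + 2) + (-1) ^ (s.2.1 + 1) + (-1) ^ (s.2.2 + 1)) *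
        f (s.1 + 2) (s.2.1 + 1) (s.2.2 + 1) =
      4 * (∑ s ∈ tripleAntidiagonal m, if Even (s.1 + 2) ∧ Even (s.2.1 + 1) then
        f (s.1 + 2) (s.2.1 + 1) (s.2.2 + 1) else 0) -
      ∑ s ∈ tripleAntidiagonal m, f (s.1 + 2) (s.2.1 + 1) (s.2.2 + 1) := by
  rw [mul_sum, ← sum_sub_distrib]
  refine sum_congr rfl fun s hs ↦ ?_
  have heven : Even (s.1 + 2 + (s.2.1 + 1) + (s.2.2 + 1)) := by
    rw [mem_tripleAntidiagonal] at hs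
    rw [show s.1 + 2 + (s.2.1 + 1) + (s.2.2 + 1) = m + 4 by omega]
    exact hm.add (by decide)
  rw [neg_one_pow_add_neg_one_pow_add_neg_one_pow heven, sub_mul, mul_assoc, ite_mul, one_mul,
    zero_mul]

section PartialFractions

variable {K : Type*} [Field K]

lemma sum_antidiagonal_one_div_pow_mul_pow {x y : K} (hx : x ≠ 0) (hy : y ≠ 0) (hxy : x ≠ y)
    (n : ℕ) :
    ∑ p ∈ antidiagonal n, 1 / (x ^ (p.1 + 1) * y ^ (p.2 + 1)) =
      1 / (x ^ (n + 1) * (y - x)) + 1 / (y ^ (n + 1) * (x - y)) := by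
  have hyx' : y - x ≠ 0 := sub_ne_zero.2 hxy.symm
  have hxy' : x - y ≠ 0 := sub_ne_zero.2 hxy
  induction n with
  | zero =>
    simp only [Nat.antidiagonal_zero, sum_singleton]
    field_simp
    ring
  | succ n ih =>
    have hfactor (p : ℕ × ℕ) : 1 / (x ^ (p.1 + 1 + 1) * y ^ (p.2 + 1)) =
        1 / x * (1 / (x ^ (p.1 + 1) * y ^ (p.2 + 1))) := by
      field_simp
      ring
    rw [Nat.sum_antidiagonal_succ]
    simp only [hfactor]
    rw [← mul_sum, ih]
    field_simp
    ring

lemma sum_tripleAntidiagonal_one_div_pow_mul_pow_mul_pow {x y z : K} (hx : x ≠ 0) (hy : y ≠ 0)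
    (hz : z ≠ 0) (hxy : x ≠ y) (hxz : x ≠ z) (hyz : y ≠ z) (n : ℕ) :
    ∑ s ∈ tripleAntidiagonal n, 1 / (x ^ (s.1 + 1) * y ^ (s.2.1 + 1) * z ^ (s.2.2 + 1)) =
      1 / (x ^ (n + 1) * ((y - x) * (z - x))) + 1 / (y ^ (n + 1) * ((x - y) * (z - y))) +
        1 / (z ^ (n + 1) * ((x - z) * (y - z))) := by
  have hinner (p : ℕ × ℕ) :
      ∑ q ∈ antidiagonal p.2, 1 / (x ^ (p.1 + 1) * y ^ (q.1 + 1) * z ^ (q.2 + 1)) =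
        1 / (x ^ (p.1 + 1) * y ^ (p.2 + 1)) * (1 / (z - y)) +
          1 / (x ^ (p.1 + 1) * z ^ (p.2 + 1)) * (1 / (y - z)) := by
    calc
      _ = 1 / x ^ (p.1 + 1) * ∑ q ∈ antidiagonal p.2, 1 / (y ^ (q.1 + 1) * z ^ (q.2 + 1)) := by
        simp only [mul_sum, one_div_mul_one_div, mul_assoc]
      _ = _ := by
        rw [sum_antidiagonal_one_div_pow_mul_pow hy hz hyz, mul_add]
        simp only [one_div_mul_one_div, mul_assoc]
  rw [sum_tripleAntidiagonal fun i j l ↦ 1 / (x ^ (i + 1) * y ^ (j + 1) * z ^ (l + 1))]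
  simp only [hinner]
  rw [sum_add_distrib, ← sum_mul, ← sum_mul, sum_antidiagonal_one_div_pow_mul_pow hx hy hxy,
    sum_antidiagonal_one_div_pow_mul_pow hx hz hxz]
  have hzy' : z - y ≠ 0 := sub_ne_zero.2 hyz.symm
  have hyz' : y - z ≠ 0 := sub_ne_zero.2 hyz
  have hyx' : y - x ≠ 0 := sub_ne_zero.2 hxy.symm
  have hxy' : x - y ≠ 0 := sub_ne_zero.2 hxy
  have hzx' : z - x ≠ 0 := sub_ne_zero.2 hxz.symm
  have hxz' : x - z ≠ 0 := sub_ne_zero.2 hxz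
  field_simp
  ring

end PartialFractions

section FiniteSums

variable {R : Type*} [CommRing R]

lemma two_mul_sum_range_mul_sum_range (f : ℕ → R) (n : ℕ) :
    2 * ∑ j ∈ range n, f j * ∑ l ∈ range j, f l =
      (∑ j ∈ range n, f j) ^ 2 - ∑ j ∈ range n, f j ^ 2 := by
  induction n with
  | zero => simp
  | succ n ih =>
    simp only [sum_range_succ]
    linear_combination ih

end FiniteSums

section Series

lemma sum_tsum_eq_of_hasSum_sum {ι α : Type*} {s : Finset ι} {f : ι → α → ℝ} {a : ℝ}
    (hf : ∀ i ∈ s, ∀ t, 0 ≤ f i t) (h : HasSum (fun t ↦ ∑ i ∈ s, f i t) a) :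
    ∑ i ∈ s, ∑' t, f i t = a := by
  have hsummable (i) (hi : i ∈ s) : Summable (f i) :=
    h.summable.of_nonneg_of_le (hf i hi) fun t ↦ single_le_sum (fun i hi ↦ hf i hi t) hi
  rw [← Summable.tsum_finsetSum hsummable, h.tsum_eq]

lemma tendsto_sum_range_sub_shift {G : Type*} [AddCommGroup G] [TopologicalSpace G]
    [IsTopologicalAddGroup G] {g : ℕ → G} (hg : Tendsto g atTop (𝓝 0)) (M : ℕ) :
    Tendsto (fun N ↦ ∑ j ∈ range N, (g j - g (j + M))) atTop (𝓝 (∑ i ∈ range M, g i)) := by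
  have htail : Tendsto (fun N ↦ ∑ i ∈ range M, g (N + i)) atTop (𝓝 0) := by
    rw [← sum_const_zero (s := range M)]
    exact tendsto_finsetSum _ fun i _ ↦ hg.comp (tendsto_add_atTop_nat i)
  have hsum (N : ℕ) : ∑ j ∈ range N, (g j - g (j + M)) =
      ∑ i ∈ range M, g i - ∑ i ∈ range M, g (N + i) := by
    rw [sum_sub_distrib, sub_eq_sub_iff_add_eq_add, ← sum_range_add, add_comm N M, sum_range_add]
    simp only [add_comm M]
  simpa only [hsum, sub_zero] using htail.const_sub (∑ i ∈ range M, g i)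

end Series

section ZetaValues

lemma hasSum_mzv_one {s : ℕ} (hs : 2 ≤ s) :
    HasSum (fun k : ℕ ↦ 1 / ((k : ℝ) + 1) ^ s) (mzv ![s]) := by
  let e : ℕ ≃ {k : Fin 1 → ℕ // StrictAnti k ∧ ∀ i, 0 < k i} :=
    { toFun x := ⟨![x + 1], Subsingleton.strictAnti _, by simp⟩
      invFun k := k.1 0 - 1
      left_inv x := by simp
      right_inv k := Subtype.ext <| funext fun i ↦ by
        fin_cases i
        exact Nat.sub_add_cancel (k.2.2 0) }
  have hmzv : mzv ![s] = ∑' k : ℕ, 1 / ((k : ℝ) + 1) ^ s := by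
    rw [mzv, ← e.tsum_eq]
    simp [e]
  rw [hmzv]
  exact_mod_cast
    ((summable_nat_add_iff 1).2 (Real.summable_one_div_nat_pow.2 (by omega : 1 < s))).hasSum

lemma mzv_one_eq_of_hasSum {s : ℕ} (hs : 2 ≤ s) {a : ℝ}
    (h : HasSum (fun n : ℕ ↦ 1 / (n : ℝ) ^ s) a) : mzv ![s] = a := by
  refine (hasSum_mzv_one hs).unique ?_
  have := (hasSum_nat_add_iff' 1).2 h
  simpa [show s ≠ 0 by omega] using this

/-- The triples `x > y > z`. A triple of indices starting at `0` stands for the summation indices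
`x + 1 > y + 1 > z + 1` of a multiple zeta value of depth `3`. -/
def strictTriples : Set (ℕ × ℕ × ℕ) := {t | t.2.2 < t.2.1 ∧ t.2.1 < t.1}

/-- The correspondence between `strictTriples` and the strictly decreasing families of positive
integers over which `mzv` sums in depth `3`. -/
def strictTriplesEquiv :
    strictTriples ≃ {k : Fin 3 → ℕ // StrictAnti k ∧ ∀ i, 0 < k i} where
  toFun t := ⟨![t.1.1 + 1, t.1.2.1 + 1, t.1.2.2 + 1],
    Fin.strictAnti_iff_succ_lt.2 <|
      Fin.forall_fin_two.2 ⟨by simpa using t.2.2, by simpa using t.2.1⟩,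
    by simp [Fin.forall_fin_succ]⟩
  invFun k := ⟨(k.1 0 - 1, k.1 1 - 1, k.1 2 - 1), by
    have h01 : k.1 1 < k.1 0 := k.2.1 (by decide)
    have h12 : k.1 2 < k.1 1 := k.2.1 (by decide)
    have h2 := k.2.2 2
    constructor <;> dsimp only <;> omega⟩
  left_inv t := by simp
  right_inv k := by
    refine Subtype.ext <| funext fun i ↦ ?_
    fin_cases i <;> exact Nat.sub_add_cancel (k.2.2 _)

lemma mzv_three (a b c : ℕ) :
    mzv ![a, b, c] = ∑' t : strictTriples,
      1 / (((t.1.1 : ℝ) + 1) ^ a * ((t.1.2.1 : ℝ) + 1) ^ b * ((t.1.2.2 : ℝ) + 1) ^ c) := by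
  rw [mzv, ← strictTriplesEquiv.tsum_eq]
  simp [strictTriplesEquiv, Fin.prod_univ_succ, mul_assoc, mul_comm]

end ZetaValues

section Distinguish

/-- One of the three entries of a strict triple is moved to the front, the other two keeping their
order. The partial fraction of `1 / (x ^ i * y ^ j * z ^ l)` attaches one term to each choice. -/
def distinguish (p : strictTriples × Fin 3) : ℕ × ℕ × ℕ :=
  ![(p.1.1.1, p.1.1.2.1, p.1.1.2.2), (p.1.1.2.1, p.1.1.1, p.1.1.2.2),
    (p.1.1.2.2, p.1.1.1, p.1.1.2.1)] p.2

lemma distinguish_injective : Function.Injective distinguish := by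
  rintro ⟨⟨⟨x, y, z⟩, hzy, hyx⟩, i⟩ ⟨⟨⟨x', y', z'⟩, hzy', hyx'⟩, i'⟩ h
  fin_cases i <;> fin_cases i' <;>
    simp only [distinguish, Fin.zero_eta, Fin.mk_one, Fin.reduceFinMk, Matrix.cons_val,
      Prod.mk.injEq, Subtype.ext_iff, Fin.reduceEq, and_true, and_false]
      at h hzy hyx hzy' hyx' ⊢ <;>
    omega

lemma mem_range_distinguish {t : ℕ × ℕ × ℕ} :
    t ∈ Set.range distinguish ↔ t.2.2 < t.2.1 ∧ t.1 ≠ t.2.1 ∧ t.1 ≠ t.2.2 := by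
  constructor
  · rintro ⟨⟨⟨⟨x, y, z⟩, hzy, hyx⟩, i⟩, rfl⟩
    fin_cases i <;>
      simp only [distinguish, Fin.zero_eta, Fin.mk_one, Fin.reduceFinMk, Matrix.cons_val, ne_eq]
        at hzy hyx ⊢ <;>
      omega
  · obtain ⟨k, j, l⟩ := t
    rintro ⟨hlj, hkj, hkl⟩
    dsimp only at hlj hkj hkl
    rcases hkj.lt_or_gt with hkj | hjk
    · rcases hkl.lt_or_gt with hkl | hlk
      · exact ⟨(⟨(j, l, k), hkl, hlj⟩, 2), rfl⟩
      · exact ⟨(⟨(j, k, l), hlk, hkj⟩, 1), rfl⟩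
    · exact ⟨(⟨(k, j, l), hlj, hjk⟩, 0), rfl⟩

end Distinguish

section Summability

lemma one_div_mul_le_rpow {b c : ℝ} (hb : 0 ≤ b) (hc : 0 ≤ c) (hcb : c ≤ b ^ 3) :
    1 / (b * c) ≤ c ^ (-(4 / 3) : ℝ) := by
  rcases hc.eq_or_lt with rfl | hc
  · simp [Real.zero_rpow]
  have hroot : c ^ (1 / 3 : ℝ) ≤ b := by
    calc
      c ^ (1 / 3 : ℝ) ≤ (b ^ 3) ^ (1 / 3 : ℝ) := by gcongr
      _ = b := by rw [← Real.rpow_natCast, ← Real.rpow_mul hb]; norm_num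
  rw [Real.rpow_neg hc.le, ← one_div, show (4 / 3 : ℝ) = 1 / 3 + 1 by norm_num,
    Real.rpow_add_one hc.ne']
  gcongr

lemma summable_mul_abs_sub_mul_abs_sub_rpow {s : ℝ} (hs : 1 < s) :
    Summable fun t : ℕ × ℕ × ℕ ↦
      (((t.1 : ℝ) + 1) * |(t.2.1 : ℝ) - t.1| * |(t.2.2 : ℝ) - t.1|) ^ (-s) := by
  have hnat : Summable fun n : ℕ ↦ ((n : ℝ) + 1) ^ (-s) := by
    exact_mod_cast (summable_nat_add_iff 1).2 (Real.summable_nat_rpow.2 (neg_lt_neg hs))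
  have hint := Real.summable_abs_int_rpow hs
  have hprod : Summable fun t : ℕ × ℤ × ℤ ↦
      ((t.1 : ℝ) + 1) ^ (-s) * (|(t.2.1 : ℝ)| ^ (-s) * |(t.2.2 : ℝ)| ^ (-s)) :=
    hnat.mul_of_nonneg (hint.mul_of_nonneg hint (fun _ ↦ by positivity) fun _ ↦ by positivity)
      (fun _ ↦ by positivity) fun _ ↦ mul_nonneg (by positivity) (by positivity)
  have hinj : Function.Injective fun t : ℕ × ℕ × ℕ ↦
      (t.1, (t.2.1 : ℤ) - t.1, (t.2.2 : ℤ) - t.1) := by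
    rintro ⟨k, j, l⟩ ⟨k', j', l'⟩ h
    simp only [Prod.mk.injEq] at h ⊢
    omega
  refine (hprod.comp_injective hinj).congr fun t ↦ ?_
  simp only [Function.comp_apply, Int.cast_sub, Int.cast_natCast]
  rw [Real.mul_rpow (by positivity) (by positivity), Real.mul_rpow (by positivity) (by positivity),
    mul_assoc]

variable {K : ℕ → ℕ → ℕ → ℝ}
  (hK : ∀ k j l, l < j → |K k j l| ≤
    1 / (((max k j : ℕ) + 1) * (((k : ℝ) + 1) * |(j : ℝ) - k| * |(l : ℝ) - k|)))

include hK

lemma summable_indicator_of_abs_le :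
    Summable ({t : ℕ × ℕ × ℕ | t.2.2 < t.2.1}.indicator fun t ↦ K t.1 t.2.1 t.2.2) := by
  refine (summable_mul_abs_sub_mul_abs_sub_rpow (s := 4 / 3) (by norm_num)).of_norm_bounded ?_
  rintro ⟨k, j, l⟩
  by_cases hlj : l < j
  · rw [Set.indicator_of_mem (by exact hlj)]
    refine (hK k j l hlj).trans (one_div_mul_le_rpow (by positivity) (by positivity) ?_)
    have hk : (k : ℝ) + 1 ≤ (max k j : ℕ) + 1 := by gcongr; exact le_max_left k j
    have hj : (j : ℝ) + 1 ≤ (max k j : ℕ) + 1 := by gcongr; exact le_max_right k j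
    have hl : (l : ℝ) ≤ j := by exact_mod_cast hlj.le
    have hjk : |(j : ℝ) - k| ≤ (max k j : ℕ) + 1 := by rw [abs_le]; constructor <;> linarith
    have hlk : |(l : ℝ) - k| ≤ (max k j : ℕ) + 1 := by rw [abs_le]; constructor <;> linarith
    calc
      _ ≤ (((max k j : ℕ) : ℝ) + 1) * ((max k j : ℕ) + 1) * ((max k j : ℕ) + 1) := by gcongr
      _ = _ := by ring
  · rw [Set.indicator_of_notMem (by exact hlj), norm_zero]
    positivity

lemma hasSum_indicator_of_tendsto {S : ℕ → ℝ} {a : ℝ}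
    (hKS : ∀ k, Tendsto (fun N ↦ ∑ j ∈ range N, ∑ l ∈ range j, K k j l) atTop (𝓝 (S k)))
    (hS : HasSum S a) :
    HasSum ({t : ℕ × ℕ × ℕ | t.2.2 < t.2.1}.indicator fun t ↦ K t.1 t.2.1 t.2.2) a := by
  set G := {t : ℕ × ℕ × ℕ | t.2.2 < t.2.1}.indicator fun t ↦ K t.1 t.2.1 t.2.2
  have hsummable : Summable G := summable_indicator_of_abs_le hK
  have hrow (k j) : HasSum (fun l ↦ G (k, j, l)) (∑ l ∈ range j, K k j l) := by
    have hGK : ∀ l ∈ range j, G (k, j, l) = K k j l := fun l hl ↦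
      Set.indicator_of_mem (s := {t : ℕ × ℕ × ℕ | t.2.2 < t.2.1}) (mem_range.1 hl) _
    rw [← sum_congr rfl hGK]
    refine hasSum_sum_of_ne_finset_zero fun l hl ↦
      Set.indicator_of_notMem (s := {t : ℕ × ℕ × ℕ | t.2.2 < t.2.1}) (by simpa using hl) _
  have hslice (k) : HasSum (fun p ↦ G (k, p)) (S k) := by
    have hcol := (hsummable.prod_factor k).hasSum.prod_fiberwise (hrow k)
    rw [tendsto_nhds_unique (hKS k) hcol.tendsto_sum_nat]
    exact (hsummable.prod_factor k).hasSum
  rw [hS.unique (hsummable.hasSum.prod_fiberwise hslice)]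
  exact hsummable.hasSum

lemma hasSum_strictTriples_of_tendsto {S : ℕ → ℝ} {a : ℝ}
    (hKS : ∀ k, Tendsto (fun N ↦ ∑ j ∈ range N, ∑ l ∈ range j, K k j l) atTop (𝓝 (S k)))
    (hS : HasSum S a) :
    HasSum (fun t : strictTriples ↦ K t.1.1 t.1.2.1 t.1.2.2 + K t.1.2.1 t.1.1 t.1.2.2 +
      K t.1.2.2 t.1.1 t.1.2.1) a := by
  have htie : ∀ t ∉ Set.range distinguish,
      {t : ℕ × ℕ × ℕ | t.2.2 < t.2.1}.indicator (fun t ↦ K t.1 t.2.1 t.2.2) t = 0 := by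
    rintro ⟨k, j, l⟩ ht
    refine Set.indicator_apply_eq_zero.2 fun hlj ↦ abs_nonpos_iff.1 ((hK k j l hlj).trans ?_)
    have htie : k = j ∨ k = l := by
      by_contra! h
      exact ht (mem_range_distinguish.2 ⟨hlj, h⟩)
    rcases htie with rfl | rfl <;> simp
  have h := (distinguish_injective.hasSum_iff htie).2 (hasSum_indicator_of_tendsto hK hKS hS)
  convert h.prod_fiberwise fun t ↦ hasSum_fintype _ using 2 with t
  obtain ⟨⟨x, y, z⟩, hzy, hyx⟩ := t
  dsimp only at hzy hyx
  simp [Fin.sum_univ_three, distinguish, hzy, hyx, hzy.trans hyx]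

end Summability

section Harmonic

/-- The generalized harmonic number `1 + 1 / 2 ^ p + ⋯ + 1 / n ^ p`. -/
noncomputable def genHarmonic (p n : ℕ) : ℝ := ∑ i ∈ range n, 1 / ((i : ℝ) + 1) ^ p

lemma genHarmonic_succ (p n : ℕ) :
    genHarmonic p (n + 1) = genHarmonic p n + 1 / ((n : ℝ) + 1) ^ p :=
  sum_range_succ _ n

lemma genHarmonic_nonneg (p n : ℕ) : 0 ≤ genHarmonic p n :=
  sum_nonneg fun _ _ ↦ by positivity

lemma sum_range_one_div_sub_pow (p k : ℕ) :
    ∑ j ∈ range k, 1 / ((j : ℝ) - k) ^ p = (-1) ^ p * genHarmonic p k := by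
  rw [← sum_range_reflect, genHarmonic, mul_sum]
  refine sum_congr rfl fun i hi ↦ ?_
  have hcast : ((k - 1 - i : ℕ) : ℝ) = k - (i + 1) := by
    rw [Nat.sub_sub, add_comm 1 i, Nat.cast_sub (by simpa using hi)]
    push_cast
    rfl
  rw [hcast, sub_sub_cancel_left, neg_pow]
  rcases neg_one_pow_eq_or ℝ p with h | h <;> simp [h]

lemma sum_range_one_div_sub_pow_add {p : ℕ} (hp : p ≠ 0) (k r : ℕ) :
    ∑ j ∈ range (r + (k + 1)), 1 / ((j : ℝ) - k) ^ p =
      (-1) ^ p * genHarmonic p k + genHarmonic p r := by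
  rw [add_comm r, sum_range_add, sum_range_succ, sum_range_one_div_sub_pow, genHarmonic.eq_1 p r]
  simp [hp, add_comm, add_left_comm]

lemma sum_range_one_div_sub_mul_sum_range (k : ℕ) :
    ∑ j ∈ range k, 1 / ((j : ℝ) - k) * ∑ l ∈ range j, 1 / ((l : ℝ) - k) =
      (genHarmonic 1 k ^ 2 - genHarmonic 2 k) / 2 := by
  have hpairs := two_mul_sum_range_mul_sum_range (fun j : ℕ ↦ 1 / ((j : ℝ) - k)) k
  have hone := sum_range_one_div_sub_pow 1 k
  have htwo := sum_range_one_div_sub_pow 2 k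
  simp only [pow_one, neg_one_sq, one_mul, neg_mul, ← one_div_pow] at hone htwo
  rw [hone, htwo, neg_sq] at hpairs
  linear_combination hpairs / 2

lemma tendsto_genHarmonic_one_div_add (K : ℕ) :
    Tendsto (fun n : ℕ ↦ genHarmonic 1 n / ((n : ℝ) + 1 + K)) atTop (𝓝 0) := by
  have hcesaro := (tendsto_one_div_add_atTop_nhds_zero_nat (𝕜 := ℝ)).cesaro
  refine squeeze_zero (fun n ↦ div_nonneg (genHarmonic_nonneg 1 n) (by positivity)) (fun n ↦ ?_)
    hcesaro
  rcases n.eq_zero_or_pos with rfl | hn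
  · simp [genHarmonic]
  · simp only [genHarmonic, pow_one, div_eq_inv_mul (∑ _ ∈ _, _)]
    gcongr
    linarith [K.cast_nonneg (α := ℝ)]

lemma hasSum_one_div_add_one_mul_add (k : ℕ) :
    HasSum (fun r : ℕ ↦ 1 / (((r : ℝ) + 1) * (r + k + 2))) (genHarmonic 1 (k + 1) / (k + 1)) := by
  rw [hasSum_iff_tendsto_nat_of_nonneg fun r ↦ by positivity]
  have htelescope := (tendsto_sum_range_sub_shift
    (tendsto_one_div_add_atTop_nhds_zero_nat (𝕜 := ℝ)) (k + 1)).div_const ((k : ℝ) + 1)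
  simp only [genHarmonic, pow_one]
  refine htelescope.congr fun N ↦ ?_
  rw [sum_div]
  refine sum_congr rfl fun r _ ↦ ?_
  push_cast
  field_simp
  ring

lemma hasSum_genHarmonic_mul_one_div_sub_one_div_succ (k : ℕ) :
    HasSum (fun r : ℕ ↦ genHarmonic 1 r * (1 / ((r : ℝ) + 1 + k) - 1 / (r + 1 + (k + 1))))
      (genHarmonic 1 (k + 1) / (k + 1)) := by
  rw [hasSum_iff_tendsto_nat_of_nonneg fun r ↦ mul_nonneg (genHarmonic_nonneg 1 r) (sub_nonneg.2
    (one_div_le_one_div_of_le (by positivity) (by linarith)))]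
  have habel (N : ℕ) : ∑ r ∈ range N, 1 / (((r : ℝ) + 1) * (r + k + 2)) -
      genHarmonic 1 N / ((N : ℝ) + 1 + k) =
      ∑ r ∈ range N, genHarmonic 1 r * (1 / ((r : ℝ) + 1 + k) - 1 / (r + 1 + (k + 1))) := by
    induction N with
    | zero => simp [genHarmonic]
    | succ N ih =>
      rw [sum_range_succ, sum_range_succ, ← ih, genHarmonic_succ]
      push_cast
      field_simp
      ring
  simpa only [habel, sub_zero] using
    (hasSum_one_div_add_one_mul_add k).tendsto_sum_nat.sub (tendsto_genHarmonic_one_div_add k)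

lemma hasSum_genHarmonic_mul_one_div_sub_one_div (K : ℕ) :
    HasSum (fun r : ℕ ↦ genHarmonic 1 r * (1 / ((r : ℝ) + 1) - 1 / (r + 1 + K)))
      ((genHarmonic 1 K ^ 2 + genHarmonic 2 K) / 2) := by
  induction K with
  | zero => simp [genHarmonic]
  | succ K ih =>
    convert ih.add (hasSum_genHarmonic_mul_one_div_sub_one_div_succ K) using 1
    · ext r
      push_cast
      ring
    · simp only [genHarmonic_succ]
      field_simp
      ring

lemma hasSum_genHarmonic_div_add_one_mul_add (k : ℕ) :
    HasSum (fun r : ℕ ↦ genHarmonic 1 r / (((r : ℝ) + 1) * (r + k + 2)))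
      ((genHarmonic 1 (k + 1) ^ 2 + genHarmonic 2 (k + 1)) / 2 / (k + 1)) := by
  refine ((hasSum_genHarmonic_mul_one_div_sub_one_div (k + 1)).div_const
    ((k : ℝ) + 1)).congr_fun fun r ↦ ?_
  push_cast
  field_simp
  ring

end Harmonic

section SumFormula

/-- The term of the partial fraction decomposition of `∑ 1 / (x ^ a * y ^ b * z ^ c)` over all
exponents with `a + b + c = m + 4` and `2 ≤ a` in which the variable `k + 1` carries the high
power. The factor `max k j + 1` is the largest of the three variables. -/
noncomputable def sumKernel (m k j l : ℕ) : ℝ :=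
  1 / (((max k j : ℕ) + 1) * ((k : ℝ) + 1) ^ (m + 1) * (((j : ℝ) - k) * (l - k)))

lemma abs_sumKernel_le (m k j l : ℕ) : |sumKernel m k j l| ≤
    1 / (((max k j : ℕ) + 1) * (((k : ℝ) + 1) * |(j : ℝ) - k| * |(l : ℝ) - k|)) := by
  have hpow : 1 / ((k : ℝ) + 1) ^ (m + 1) ≤ 1 / (k + 1) :=
    one_div_le_one_div_of_le (by positivity) (le_self_pow₀ (by simp) m.succ_ne_zero)
  calc
    |sumKernel m k j l| = 1 / ((k : ℝ) + 1) ^ (m + 1) *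
        (1 / (((max k j : ℕ) + 1) * (|(j : ℝ) - k| * |(l : ℝ) - k|))) := by
      rw [sumKernel, abs_div, abs_one, abs_mul, abs_mul _ ((l : ℝ) - k), abs_of_pos (by positivity),
        one_div_mul_one_div]
      ring_nf
    _ ≤ 1 / ((k : ℝ) + 1) * (1 / (((max k j : ℕ) + 1) * (|(j : ℝ) - k| * |(l : ℝ) - k|))) := by
      gcongr
    _ = _ := by
      rw [one_div_mul_one_div]
      ring_nf

lemma sum_tripleAntidiagonal_eq_sumKernel (m : ℕ) {x y z : ℕ} (hzy : z < y) (hyx : y < x) :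
    ∑ s ∈ tripleAntidiagonal m, 1 / (((x : ℝ) + 1) ^ (s.1 + 2) * ((y : ℝ) + 1) ^ (s.2.1 + 1) *
      ((z : ℝ) + 1) ^ (s.2.2 + 1)) =
      sumKernel m x y z + sumKernel m y x z + sumKernel m z x y := by
  have hfactor (s : ℕ × ℕ × ℕ) : 1 / (((x : ℝ) + 1) ^ (s.1 + 2) * ((y : ℝ) + 1) ^ (s.2.1 + 1) *
      ((z : ℝ) + 1) ^ (s.2.2 + 1)) = 1 / ((x : ℝ) + 1) * (1 / (((x : ℝ) + 1) ^ (s.1 + 1) *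
        ((y : ℝ) + 1) ^ (s.2.1 + 1) * ((z : ℝ) + 1) ^ (s.2.2 + 1))) := by
    rw [one_div_mul_one_div, pow_succ' _ (s.1 + 1), mul_assoc, mul_assoc, mul_assoc]
  have hne {a b : ℕ} (hab : b < a) : (a : ℝ) + 1 ≠ b + 1 := by
    simpa using hab.ne'
  simp only [hfactor]
  rw [← mul_sum, sum_tripleAntidiagonal_one_div_pow_mul_pow_mul_pow (by positivity)
    (by positivity) (by positivity) (hne hyx) (hne (hzy.trans hyx)) (hne hzy)]
  simp only [sumKernel, max_eq_left hyx.le, max_eq_right hyx.le, max_eq_right (hzy.trans hyx).le,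
    add_sub_add_right_eq_sub, mul_add, one_div_mul_one_div, mul_assoc]

lemma hasSum_one_div_max_mul_sum_range (k : ℕ) :
    HasSum (fun j : ℕ ↦ 1 / (((max k j : ℕ) : ℝ) + 1) *
      (1 / ((j : ℝ) - k) * ∑ l ∈ range j, 1 / ((l : ℝ) - k))) (1 / ((k : ℝ) + 1) ^ 3) := by
  have hhead : ∑ j ∈ range (k + 1), 1 / (((max k j : ℕ) : ℝ) + 1) *
      (1 / ((j : ℝ) - k) * ∑ l ∈ range j, 1 / ((l : ℝ) - k)) =
      (genHarmonic 1 k ^ 2 - genHarmonic 2 k) / 2 / (k + 1) := by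
    have hmax : ∀ j ∈ range k, 1 / (((max k j : ℕ) : ℝ) + 1) *
        (1 / ((j : ℝ) - k) * ∑ l ∈ range j, 1 / ((l : ℝ) - k)) = 1 / ((k : ℝ) + 1) *
        (1 / ((j : ℝ) - k) * ∑ l ∈ range j, 1 / ((l : ℝ) - k)) := fun j hj ↦ by
      rw [max_eq_left (mem_range.1 hj).le]
    rw [sum_range_succ, sub_self, div_zero, zero_mul, mul_zero, add_zero, sum_congr rfl hmax,
      ← mul_sum, sum_range_one_div_sub_mul_sum_range, one_div_mul_eq_div]
  have htail : HasSum (fun r : ℕ ↦ 1 / (((max k (r + (k + 1)) : ℕ) : ℝ) + 1) *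
      (1 / (((r + (k + 1) : ℕ) : ℝ) - k) * ∑ l ∈ range (r + (k + 1)), 1 / ((l : ℝ) - k)))
      ((genHarmonic 1 (k + 1) ^ 2 + genHarmonic 2 (k + 1)) / 2 / (k + 1) -
        genHarmonic 1 k * (genHarmonic 1 (k + 1) / (k + 1))) := by
    refine ((hasSum_genHarmonic_div_add_one_mul_add k).sub
      ((hasSum_one_div_add_one_mul_add k).mul_left (genHarmonic 1 k))).congr_fun fun r ↦ ?_
    have hsum := sum_range_one_div_sub_pow_add one_ne_zero k r
    simp only [pow_one] at hsum
    rw [hsum, max_eq_right (by omega)]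
    push_cast
    rw [show (r : ℝ) + (k + 1) - k = r + 1 by ring]
    field_simp
    ring
  rw [← hasSum_nat_add_iff' (k + 1), hhead]
  refine (congrArg (HasSum _) ?_).mp htail
  simp only [genHarmonic_succ]
  field_simp
  ring

theorem sum_mzv_three (m : ℕ) :
    ∑ s ∈ tripleAntidiagonal m, mzv ![s.1 + 2, s.2.1 + 1, s.2.2 + 1] = mzv ![m + 4] := by
  have hslice (k : ℕ) : Tendsto (fun N ↦ ∑ j ∈ range N, ∑ l ∈ range j, sumKernel m k j l) atTop
      (𝓝 (1 / ((k : ℝ) + 1) ^ (m + 4))) := by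
    have h := ((hasSum_one_div_max_mul_sum_range k).mul_left
      (1 / ((k : ℝ) + 1) ^ (m + 1))).tendsto_sum_nat
    rw [one_div_mul_one_div, ← pow_add] at h
    refine h.congr fun N ↦ sum_congr rfl fun j _ ↦ ?_
    simp only [mul_sum, sumKernel, one_div_mul_one_div]
    exact sum_congr rfl fun l _ ↦ by ring
  simp only [mzv_three]
  refine sum_tsum_eq_of_hasSum_sum (fun s _ t ↦ by positivity) ?_
  convert hasSum_strictTriples_of_tendsto (fun k j l _ ↦ abs_sumKernel_le m k j l) hslice
    (hasSum_mzv_one (by omega : 2 ≤ m + 4)) using 2 with t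
  exact sum_tripleAntidiagonal_eq_sumKernel m t.2.1 t.2.2

end SumFormula

section EvenSumFormula

/-- The term of the partial fraction decomposition of `∑ 1 / (x ^ a * y ^ b * z ^ c)` over all even
exponents with `a + b + c = 2 * n + 6` and `2 ≤ a, b, c` in which `k + 1` carries the high power. -/
noncomputable def evenSumKernel (n k j l : ℕ) : ℝ :=
  1 / (((k : ℝ) + 1) ^ (2 * n + 2) *
    ((((j : ℝ) + 1) ^ 2 - (k + 1) ^ 2) * (((l : ℝ) + 1) ^ 2 - (k + 1) ^ 2)))

lemma abs_evenSumKernel_le (n k j l : ℕ) : |evenSumKernel n k j l| ≤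
    1 / (((max k j : ℕ) + 1) * (((k : ℝ) + 1) * |(j : ℝ) - k| * |(l : ℝ) - k|)) := by
  have hsq (i : ℕ) : |((i : ℝ) + 1) ^ 2 - (k + 1) ^ 2| = (i + k + 2) * |(i : ℝ) - k| := by
    rw [← abs_of_pos (by positivity : (0 : ℝ) < i + k + 2), ← abs_mul]
    ring_nf
  have hpow : 1 / ((k : ℝ) + 1) ^ (2 * n + 2) ≤ 1 :=
    div_le_one_of_le₀ (one_le_pow₀ (by simp)) (by positivity)
  have hj : 1 / ((j : ℝ) + k + 2) ≤ 1 / ((max k j : ℕ) + 1) := by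
    refine one_div_le_one_div_of_le (by positivity) ?_
    have hmax : ((max k j : ℕ) : ℝ) ≤ k + j := by
      exact_mod_cast max_le_add_of_nonneg k.zero_le j.zero_le
    linarith
  have hl : 1 / ((l : ℝ) + k + 2) ≤ 1 / (k + 1) :=
    one_div_le_one_div_of_le (by positivity) (by linarith [l.cast_nonneg (α := ℝ)])
  calc
    |evenSumKernel n k j l| = 1 / ((k : ℝ) + 1) ^ (2 * n + 2) * (1 / ((j : ℝ) + k + 2)) *
        (1 / ((l : ℝ) + k + 2)) * (1 / (|(j : ℝ) - k| * |(l : ℝ) - k|)) := by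
      rw [evenSumKernel, abs_div, abs_one, abs_mul, abs_mul, hsq, hsq, abs_of_pos (by positivity)]
      simp only [one_div_mul_one_div]
      ring_nf
    _ ≤ 1 * (1 / ((max k j : ℕ) + 1)) * (1 / (k + 1)) * (1 / (|(j : ℝ) - k| * |(l : ℝ) - k|)) := by
      gcongr
    _ = _ := by
      simp only [one_mul, one_div_mul_one_div, mul_assoc]

lemma sum_tripleAntidiagonal_eq_evenSumKernel (n : ℕ) {x y z : ℕ} (hzy : z < y) (hyx : y < x) :
    ∑ s ∈ tripleAntidiagonal n, 1 / (((x : ℝ) + 1) ^ (2 * s.1 + 2) *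
      ((y : ℝ) + 1) ^ (2 * s.2.1 + 2) * ((z : ℝ) + 1) ^ (2 * s.2.2 + 2)) =
      evenSumKernel n x y z + evenSumKernel n y x z + evenSumKernel n z x y := by
  have hne {a b : ℕ} (hab : b < a) : ((a : ℝ) + 1) ^ 2 ≠ (b + 1) ^ 2 := by
    have : (b : ℝ) < a := by exact_mod_cast hab
    exact (by gcongr : ((b : ℝ) + 1) ^ 2 < (a + 1) ^ 2).ne'
  have hpow (a : ℝ) (i : ℕ) : a ^ (2 * i + 2) = (a ^ 2) ^ (i + 1) := by
    rw [← pow_mul, mul_add_one]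
  simp only [hpow, evenSumKernel]
  exact sum_tripleAntidiagonal_one_div_pow_mul_pow_mul_pow (by positivity) (by positivity)
    (by positivity) (hne hyx) (hne (hzy.trans hyx)) (hne hzy) n

lemma one_div_sq_sub_sq (k j : ℕ) : 1 / (((j : ℝ) + 1) ^ 2 - (k + 1) ^ 2) =
    (1 / ((j : ℝ) - k) - 1 / (j + k + 2)) / (2 * (k + 1)) +
      if j = k then 1 / (4 * ((k : ℝ) + 1) ^ 2) else 0 := by
  rcases eq_or_ne j k with rfl | hjk
  · simp only [sub_self, div_zero, zero_sub, if_true]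
    field_simp
    ring
  · have hsub : (j : ℝ) - k ≠ 0 := sub_ne_zero.2 (by exact_mod_cast hjk)
    rw [if_neg hjk, show ((j : ℝ) + 1) ^ 2 - (k + 1) ^ 2 = (j - k) * (j + k + 2) by ring]
    field_simp
    ring

lemma one_div_sq_sub_sq_sq (k j : ℕ) : (1 / (((j : ℝ) + 1) ^ 2 - (k + 1) ^ 2)) ^ 2 =
    (1 / ((j : ℝ) - k) ^ 2 + 1 / (j + k + 2) ^ 2) / (4 * (k + 1) ^ 2) -
      1 / (((j : ℝ) + 1) ^ 2 - (k + 1) ^ 2) / (2 * (k + 1) ^ 2) -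
      if j = k then 1 / (16 * ((k : ℝ) + 1) ^ 4) else 0 := by
  rcases eq_or_ne j k with rfl | hjk
  · simp only [sub_self, if_true]
    field_simp
    ring
  · have hsub : (j : ℝ) - k ≠ 0 := sub_ne_zero.2 (by exact_mod_cast hjk)
    rw [if_neg hjk, show ((j : ℝ) + 1) ^ 2 - (k + 1) ^ 2 = (j - k) * (j + k + 2) by ring]
    field_simp
    ring

lemma tendsto_sum_range_one_div_sq_sub_sq (k : ℕ) :
    Tendsto (fun N ↦ ∑ j ∈ range N, 1 / (((j : ℝ) + 1) ^ 2 - (k + 1) ^ 2)) atTop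
      (𝓝 (3 / (4 * ((k : ℝ) + 1) ^ 2))) := by
  have hzero : Tendsto (fun j : ℕ ↦ 1 / ((j : ℝ) - k)) atTop (𝓝 0) := by
    simpa only [sub_eq_add_neg] using (tendsto_atTop_add_const_right _ (-(k : ℝ))
      tendsto_natCast_atTop_atTop).const_div_atTop 1
  have hwindow : ∑ i ∈ range (k + 1 + (k + 1)), 1 / ((i : ℝ) - k) = 1 / ((k : ℝ) + 1) := by
    simpa [genHarmonic_succ] using sum_range_one_div_sub_pow_add one_ne_zero k (k + 1)
  have htelescope := (tendsto_sum_range_sub_shift hzero (k + 1 + (k + 1))).div_const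
    (2 * ((k : ℝ) + 1))
  have htie := (hasSum_ite_eq k (1 / (4 * ((k : ℝ) + 1) ^ 2))).tendsto_sum_nat
  convert htelescope.add htie using 2 with N
  · rw [sum_div, ← sum_add_distrib]
    refine sum_congr rfl fun j _ ↦ ?_
    rw [one_div_sq_sub_sq]
    push_cast
    ring_nf
  · rw [hwindow]
    field_simp
    ring

lemma hasSum_one_div_sub_pow {p : ℕ} (hp : 2 ≤ p) (k : ℕ) :
    HasSum (fun j : ℕ ↦ 1 / ((j : ℝ) - k) ^ p) ((-1) ^ p * genHarmonic p k + mzv ![p]) := by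
  have hhead := sum_range_one_div_sub_pow_add (by omega : p ≠ 0) k 0
  rw [zero_add, genHarmonic.eq_1 p 0, sum_range_zero, add_zero] at hhead
  rw [← hasSum_nat_add_iff' (k + 1), hhead, add_sub_cancel_left]
  refine (hasSum_mzv_one hp).congr_fun fun j ↦ ?_
  push_cast
  ring_nf

lemma hasSum_one_div_add_pow {p : ℕ} (hp : 2 ≤ p) (k : ℕ) :
    HasSum (fun j : ℕ ↦ 1 / ((j : ℝ) + k + 1) ^ p) (mzv ![p] - genHarmonic p k) := by
  simpa [genHarmonic] using (hasSum_nat_add_iff' k).2 (hasSum_mzv_one hp)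

lemma tendsto_sum_range_one_div_sq_sub_sq_sq (k : ℕ) :
    Tendsto (fun N ↦ ∑ j ∈ range N, (1 / (((j : ℝ) + 1) ^ 2 - (k + 1) ^ 2)) ^ 2) atTop
      (𝓝 (mzv ![2] / (2 * ((k : ℝ) + 1) ^ 2) - 11 / (16 * ((k : ℝ) + 1) ^ 4))) := by
  have hsquares := (((hasSum_one_div_sub_pow le_rfl k).add
    (hasSum_one_div_add_pow le_rfl (k + 1))).div_const (4 * ((k : ℝ) + 1) ^ 2)).tendsto_sum_nat
  have hcross := (tendsto_sum_range_one_div_sq_sub_sq k).div_const (2 * ((k : ℝ) + 1) ^ 2)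
  have htie := (hasSum_ite_eq k (1 / (16 * ((k : ℝ) + 1) ^ 4))).tendsto_sum_nat
  convert (hsquares.sub hcross).sub htie using 2 with N
  · rw [sum_div, ← sum_sub_distrib, ← sum_sub_distrib]
    refine sum_congr rfl fun j _ ↦ ?_
    rw [one_div_sq_sub_sq_sq]
    push_cast
    ring_nf
  · rw [genHarmonic_succ]
    field_simp
    ring

theorem sum_mzv_three_two_mul (n : ℕ) :
    ∑ s ∈ tripleAntidiagonal n, mzv ![2 * s.1 + 2, 2 * s.2.1 + 2, 2 * s.2.2 + 2] =
      5 / 8 * mzv ![2 * n + 6] - 1 / 4 * (mzv ![2] * mzv ![2 * n + 4]) := by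
  have hslice (k : ℕ) :
      Tendsto (fun N ↦ ∑ j ∈ range N, ∑ l ∈ range j, evenSumKernel n k j l) atTop
        (𝓝 (5 / 8 * (1 / ((k : ℝ) + 1) ^ (2 * n + 6)) -
          mzv ![2] / 4 * (1 / ((k : ℝ) + 1) ^ (2 * n + 4)))) := by
    have hpairs := ((((tendsto_sum_range_one_div_sq_sub_sq k).pow 2).sub
      (tendsto_sum_range_one_div_sq_sub_sq_sq k)).div_const 2).const_mul
        (1 / ((k : ℝ) + 1) ^ (2 * n + 2))
    convert hpairs using 2 with N
    · rw [← two_mul_sum_range_mul_sum_range, mul_div_cancel_left₀ _ two_ne_zero]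
      simp only [mul_sum, evenSumKernel, one_div_mul_one_div]
    · field_simp
      ring
  have hsum := ((hasSum_mzv_one (by omega : 2 ≤ 2 * n + 6)).mul_left (5 / 8)).sub
    ((hasSum_mzv_one (by omega : 2 ≤ 2 * n + 4)).mul_left (mzv ![2] / 4))
  rw [show mzv ![2] / 4 * mzv ![2 * n + 4] = 1 / 4 * (mzv ![2] * mzv ![2 * n + 4]) by ring] at hsum
  simp only [mzv_three]
  refine sum_tsum_eq_of_hasSum_sum (fun s _ t ↦ by positivity) ?_
  convert hasSum_strictTriples_of_tendsto (fun k j l _ ↦ abs_evenSumKernel_le n k j l) hslice hsum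
    using 2 with t
  exact sum_tripleAntidiagonal_eq_evenSumKernel n t.2.1 t.2.2

theorem sum_mzv_three_even {m : ℕ} (hm : Even m) :
    (∑ s ∈ tripleAntidiagonal m, if Even (s.1 + 2) ∧ Even (s.2.1 + 1) then
      mzv ![s.1 + 2, s.2.1 + 1, s.2.2 + 1] else 0) =
      5 / 8 * mzv ![m + 4] - 1 / 4 * (mzv ![2] * mzv ![m + 2]) := by
  obtain ⟨m, rfl⟩ := hm.exists_two_nsmul
  rw [smul_eq_mul]
  rcases m with _ | n
  · have hempty : ∀ s ∈ tripleAntidiagonal 0, ¬(Even (s.1 + 2) ∧ Even (s.2.1 + 1)) := by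
      rintro ⟨i, j, l⟩ hs ⟨-, hj⟩
      rw [mem_tripleAntidiagonal] at hs
      simp only [Nat.even_iff] at hj hs
      omega
    rw [mul_zero, sum_eq_zero fun s hs ↦ if_neg (hempty s hs),
      mzv_one_eq_of_hasSum le_rfl hasSum_zeta_two,
      mzv_one_eq_of_hasSum (by norm_num) hasSum_zeta_four]
    ring
  · exact (sum_tripleAntidiagonal_ite_even (fun a b c ↦ mzv ![a, b, c]) n).trans
      (sum_mzv_three_two_mul n)

end EvenSumFormula

end MultipleZeta

theorem weighted_sum_depth3_alt (w : ℕ) (hw : 4 ≤ w) (hew : Even w) :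
    (∑ a ∈ Finset.Icc 2 (w - 2), ∑ b ∈ Finset.Icc 1 (w - a - 1),
        ((-1 : ℝ) ^ a + (-1 : ℝ) ^ b + (-1 : ℝ) ^ (w - a - b)) * mzv ![a, b, w - a - b])
    = (3 / 2) * mzv ![w] - mzv ![2] * mzv ![w - 2] := by
  obtain ⟨m, rfl⟩ := Nat.exists_eq_add_of_le' hw
  have hm : Even m := by simpa [Nat.even_add, show Even 4 by decide] using hew
  calc
    _ = ∑ s ∈ MultipleZeta.tripleAntidiagonal m,
          ((-1 : ℝ) ^ (s.1 + 2) + (-1) ^ (s.2.1 + 1) + (-1) ^ (s.2.2 + 1)) *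
            mzv ![s.1 + 2, s.2.1 + 1, s.2.2 + 1] :=
      MultipleZeta.sum_Icc_sum_Icc_eq_sum_tripleAntidiagonal
        (fun a b c ↦ ((-1 : ℝ) ^ a + (-1) ^ b + (-1) ^ c) * mzv ![a, b, c]) m
    _ = 4 * (5 / 8 * mzv ![m + 4] - 1 / 4 * (mzv ![2] * mzv ![m + 2])) - mzv ![m + 4] := by
      rw [MultipleZeta.sum_tripleAntidiagonal_neg_one_pow_mul (fun a b c ↦ mzv ![a, b, c]) hm,
        MultipleZeta.sum_mzv_three_even hm, MultipleZeta.sum_mzv_three]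
    _ = 3 / 2 * mzv ![m + 4] - mzv ![2] * mzv ![m + 4 - 2] := by
      rw [show m + 4 - 2 = m + 2 by omega]
      ring
end

section
/- Let w ≥ 4 be an even integer. Then Σ_{a+c=w−1, a≥2, c≥1} (−1)^a·ζ(a,1,c) = ζ(w−2,2) − ζ(w−1,1) + (1/2)·ζ(w). -/
/-!
Write a summation index as `k > m > n`. Summing the geometric progression in `a` turns the left-hand
side into a combination of the two positive series `∑ 1/(n^(w-3) m k (k+n))` and
`∑ 1/(k^(w-2) m (k+n))`. In the first one the sums over `k` and then over `m` telescope; in the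
second one they are finite. With `h(x, j) = 1/x + 1/(x+1) + ⋯ + 1/(x+j-1)`, both reduce to the
single identity `∑_{j ≤ n} h(n+1, j)/j = H_n^{(2)}/2`, proved by induction on `n`. Hence the first
series is `(ζ(w-2,2) + ζ(w))/2` and the second one is `ζ(w-2,2)/2 - ζ(w-1,1)`.
-/

open Finset Filter Topology

/-- The index set of `mzv` in depth `d`: strictly decreasing `d`-tuples of positive integers. -/
abbrev MZVIndex (d : ℕ) : Type := {k : Fin d → ℕ // StrictAnti k ∧ ∀ i, 0 < k i}

/-- The sum `1/x + 1/(x+1) + ⋯ + 1/(x+n-1)`, a difference of harmonic numbers when `x` is a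
positive integer. -/
noncomputable def shiftedHarmonic (x : ℝ) (n : ℕ) : ℝ := ∑ j ∈ range n, 1 / (x + j)

/-- The generalized harmonic number `H_n^{(s)} = 1/1^s + 1/2^s + ⋯ + 1/n^s`. -/
noncomputable def powHarmonic (s n : ℕ) : ℝ := ∑ j ∈ range n, 1 / ((j : ℝ) + 1) ^ s

namespace shiftedHarmonic

theorem succ_right (x : ℝ) (n : ℕ) :
    shiftedHarmonic x (n + 1) = shiftedHarmonic x n + 1 / (x + n) :=
  sum_range_succ _ _

theorem succ_left (x : ℝ) (n : ℕ) :
    shiftedHarmonic x (n + 1) = 1 / x + shiftedHarmonic (x + 1) n := by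
  simp only [shiftedHarmonic, sum_range_succ', Nat.cast_add, Nat.cast_one, Nat.cast_zero, add_zero]
  rw [add_comm]
  congr! 3
  ring

theorem add_one_left (x : ℝ) (n : ℕ) :
    shiftedHarmonic (x + 1) n = shiftedHarmonic x n + (1 / (x + n) - 1 / x) := by
  linarith [succ_left x n, succ_right x n]

theorem sum_div_mul_add_one_left {x : ℝ} (hx : 0 < x) (n : ℕ) :
    ∑ j ∈ range n, 1 / ((j : ℝ) + 1) * shiftedHarmonic (x + 1) (j + 1) =
      ∑ j ∈ range n, 1 / ((j : ℝ) + 1) * shiftedHarmonic x (j + 1)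
        - 1 / x * shiftedHarmonic (x + 1) n := by
  rw [shiftedHarmonic, mul_sum, ← sum_sub_distrib]
  refine sum_congr rfl fun j _ ↦ ?_
  have increment : 1 / ((j : ℝ) + 1) * (1 / (x + (j + 1 : ℕ)) - 1 / x) =
      -(1 / x * (1 / (x + 1 + j))) := by
    push_cast
    field_simp
    ring
  rw [add_one_left, mul_add, increment, sub_eq_add_neg]

theorem sum_div_mul_succ (n : ℕ) :
    ∑ j ∈ range n, 1 / ((j : ℝ) + 1) * shiftedHarmonic (n + 1) (j + 1) =
      1 / 2 * powHarmonic 2 n := by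
  induction n with
  | zero => simp [powHarmonic]
  | succ n ih =>
    push_cast
    rw [sum_range_succ, sum_div_mul_add_one_left (by positivity), ih, succ_right, powHarmonic,
      powHarmonic, sum_range_succ]
    field_simp
    ring

theorem sum_div_mul (n : ℕ) :
    ∑ j ∈ range n, 1 / ((j : ℝ) + 1) * shiftedHarmonic (n + 2) j =
      1 / 2 * powHarmonic 2 n - 1 / ((n : ℝ) + 1) * powHarmonic 1 n := by
  rw [← sum_div_mul_succ, powHarmonic, mul_sum, ← sum_sub_distrib]
  refine sum_congr rfl fun j _ ↦ ?_
  rw [succ_left, show (n : ℝ) + 1 + 1 = n + 2 by ring]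
  ring

end shiftedHarmonic

theorem hasSum_sub_nat_add_of_antitone {g : ℕ → ℝ} (hg : Antitone g)
    (hlim : Tendsto g atTop (𝓝 0)) (n : ℕ) :
    HasSum (fun q ↦ g q - g (q + n)) (∑ j ∈ range n, g j) := by
  rw [hasSum_iff_tendsto_nat_of_nonneg fun q ↦ sub_nonneg.2 (hg (Nat.le_add_right q n))]
  have partial_sum (N : ℕ) : ∑ q ∈ range N, (g q - g (q + n)) =
      ∑ j ∈ range n, g j - ∑ j ∈ range n, g (j + N) := by
    have h := sum_range_add g N n
    rw [add_comm N n, sum_range_add] at h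
    simp only [sum_sub_distrib, add_comm _ n, add_comm _ N]
    linarith
  have tail : Tendsto (fun N ↦ ∑ j ∈ range n, g (j + N)) atTop (𝓝 0) := by
    simpa using tendsto_finsetSum (range n) fun j _ ↦
      hlim.comp (tendsto_add_atTop_nat j |>.congr fun N ↦ add_comm N j)
  simpa [partial_sum] using tail.const_sub (∑ j ∈ range n, g j)

theorem hasSum_shiftedHarmonic {x : ℝ} (hx : 0 < x) (n : ℕ) :
    HasSum (fun q : ℕ ↦ n / ((x + q) * (x + q + n))) (shiftedHarmonic x n) := by
  have anti : Antitone fun q : ℕ ↦ 1 / (x + q) := fun p q hpq ↦ by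
    have : (p : ℝ) ≤ q := mod_cast hpq
    dsimp only
    gcongr
  have lim : Tendsto (fun q : ℕ ↦ 1 / (x + q)) atTop (𝓝 0) := by
    simp only [one_div]
    exact (tendsto_atTop_add_const_left _ x tendsto_natCast_atTop_atTop).inv_tendsto_atTop
  refine (hasSum_sub_nat_add_of_antitone anti lim n).congr_fun fun q ↦ ?_
  push_cast
  field_simp
  ring

/-- Expand `shiftedHarmonic`, exchange the two sums and apply
`(j + 1) / (y * (y + j + 1)) = 1 / y - 1 / (y + j + 1)`. -/
theorem hasSum_div_mul_shiftedHarmonic {x : ℝ} (hx : 0 < x) (n : ℕ) :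
    HasSum (fun p : ℕ ↦ 1 / (x + p) * shiftedHarmonic (x + p + 1) n)
      (∑ j ∈ range n, 1 / ((j : ℝ) + 1) * shiftedHarmonic x (j + 1)) := by
  refine (hasSum_sum fun j _ ↦ (hasSum_shiftedHarmonic hx (j + 1)).mul_left
    (1 / ((j : ℝ) + 1))).congr_fun fun p ↦ ?_
  rw [shiftedHarmonic, mul_sum]
  refine sum_congr rfl fun j _ ↦ ?_
  push_cast
  field_simp
  ring

namespace MZVIndex

theorem cast_pos {d : ℕ} (k : MZVIndex d) (i : Fin d) : (0 : ℝ) < k.1 i := mod_cast k.2.2 i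

theorem entries_two (k : MZVIndex 2) : 0 < k.1 1 ∧ k.1 1 < k.1 0 :=
  ⟨k.2.2 1, k.2.1 (by decide)⟩

theorem entries_three (k : MZVIndex 3) : 0 < k.1 2 ∧ k.1 2 < k.1 1 ∧ k.1 1 < k.1 0 :=
  ⟨k.2.2 2, k.2.1 (by decide), k.2.1 (by decide)⟩

/-- Depth-one indices, parametrized by the predecessor of the entry. -/
def oneEquiv : ℕ ≃ MZVIndex 1 where
  toFun n := ⟨![n + 1], by simp⟩
  invFun k := k.1 0 - 1
  left_inv n := by simp
  right_inv k := by
    have := k.2.2 0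
    ext i
    fin_cases i
    simp
    omega

/-- Depth-two indices, parametrized from the largest entry down, all entries lowered by one. -/
def twoEquiv : (Σ m : ℕ, Fin m) ≃ MZVIndex 2 where
  toFun x := ⟨![x.1 + 1, x.2 + 1], by simp⟩
  invFun k := ⟨k.1 0 - 1, k.1 1 - 1, by have := entries_two k; omega⟩
  left_inv x := by simp
  right_inv k := by
    have := entries_two k
    ext i
    fin_cases i <;> simp <;> omega

/-- Depth-three indices, parametrized from the largest entry down, all entries lowered by one:
once the largest entry is fixed, only finitely many indices remain. -/
def threeEquiv : (Σ k : ℕ, Σ m : Fin k, Fin m) ≃ MZVIndex 3 where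
  toFun x := ⟨![x.1 + 1, x.2.1 + 1, x.2.2 + 1], by simp [Fin.forall_fin_succ]⟩
  invFun k := ⟨k.1 0 - 1, ⟨k.1 1 - 1, by have := entries_three k; omega⟩,
    ⟨k.1 2 - 1, by have := entries_three k; dsimp only; omega⟩⟩
  left_inv x := by simp
  right_inv k := by
    have := entries_three k
    ext i
    fin_cases i <;> simp <;> omega

/-- Depth-three indices, parametrized from the smallest entry up by the numbers of integers
strictly between consecutive entries (and between `0` and the smallest one). -/
def threeGapEquiv : ℕ × ℕ × ℕ ≃ MZVIndex 3 where
  toFun x := ⟨![x.1 + x.2.1 + x.2.2 + 3, x.1 + x.2.1 + 2, x.1 + 1], by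
    simp [Fin.forall_fin_succ]⟩
  invFun k := (k.1 2 - 1, k.1 1 - k.1 2 - 1, k.1 0 - k.1 1 - 1)
  left_inv x := by ext <;> dsimp <;> omega
  right_inv k := by
    have := entries_three k
    ext i
    fin_cases i <;> simp <;> omega

variable {S : ℝ}

theorem hasSum_two {f : ℕ → ℕ → ℝ} (hf : HasSum (fun k : MZVIndex 2 ↦ f (k.1 0) (k.1 1)) S) :
    HasSum (fun m ↦ ∑ n ∈ range m, f (m + 1) (n + 1)) S := by
  refine (twoEquiv.hasSum_iff.2 hf).sigma fun m ↦ ?_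
  rw [← Fin.sum_univ_eq_sum_range fun n ↦ f (m + 1) (n + 1)]
  exact hasSum_fintype _

theorem hasSum_three {f : ℕ → ℕ → ℕ → ℝ}
    (hf : HasSum (fun k : MZVIndex 3 ↦ f (k.1 0) (k.1 1) (k.1 2)) S) :
    HasSum (fun k ↦ ∑ m ∈ range k, ∑ n ∈ range m, f (k + 1) (m + 1) (n + 1)) S := by
  refine (threeEquiv.hasSum_iff.2 hf).sigma fun k ↦ ?_
  simp only [← Fin.sum_univ_eq_sum_range]
  rw [← Fintype.sum_sigma']
  exact hasSum_fintype _

theorem hasSum_three_of_bot {f : ℕ → ℕ → ℕ → ℝ} {g : ℕ → ℕ → ℝ} {h : ℕ → ℝ}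
    (hf : HasSum (fun k : MZVIndex 3 ↦ f (k.1 0) (k.1 1) (k.1 2)) S)
    (hg : ∀ n p, HasSum (fun q ↦ f (n + p + q + 3) (n + p + 2) (n + 1)) (g n p))
    (hh : ∀ n, HasSum (g n) (h n)) : HasSum h S := by
  have hf' := threeGapEquiv.hasSum_iff.2 hf
  refine hf'.prod_fiberwise fun n ↦ ?_
  have hn := hf'.summable.prod_factor n
  rw [(hh n).unique (hn.hasSum.prod_fiberwise (hg n))]
  exact hn.hasSum

end MZVIndex

theorem summable_prod_fin {α : Type*} {d : ℕ} {f : Fin d → α → ℝ} (hf : ∀ i, Summable (f i))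
    (hf0 : ∀ i, 0 ≤ f i) : Summable fun k : Fin d → α ↦ ∏ i, f i (k i) := by
  induction d with
  | zero => exact Summable.of_finite
  | succ d ih =>
    rw [← (Fin.consEquiv fun _ ↦ α).summable_iff]
    simpa [Function.comp_def, Fin.prod_univ_succ] using
      (hf 0).mul_of_nonneg (ih (fun i ↦ hf i.succ) fun i ↦ hf0 i.succ) (hf0 0)
        fun k ↦ prod_nonneg fun i _ ↦ hf0 i.succ (k i)

/-- The spare factor `k 0` dominates the product of the `(d + 1)`-st roots of all `k i`. -/
theorem prod_rpow_le_prod_pow {d : ℕ} {s : Fin (d + 1) → ℕ} (hs0 : 2 ≤ s 0) (hs : ∀ i, 1 ≤ s i)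
    (k : MZVIndex (d + 1)) :
    ∏ i, (k.1 i : ℝ) ^ (1 + 1 / ((d + 1 : ℕ) : ℝ)) ≤ ∏ i, (k.1 i : ℝ) ^ s i := by
  have one_le (i) : (1 : ℝ) ≤ k.1 i := mod_cast k.2.2 i
  have le_top (i) : k.1 i ≤ k.1 0 := k.2.1.antitone (Fin.zero_le i)
  have root_le : ∏ i, (k.1 i : ℝ) ^ (1 / ((d + 1 : ℕ) : ℝ)) ≤ k.1 0 := calc
    _ ≤ ∏ _i : Fin (d + 1), (k.1 0 : ℝ) ^ (1 / ((d + 1 : ℕ) : ℝ)) := by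
      gcongr with i
      exact le_top i
    _ = k.1 0 := by
      rw [prod_const, card_univ, Fintype.card_fin, one_div,
        Real.rpow_inv_natCast_pow (Nat.cast_nonneg _) d.succ_ne_zero]
  calc
    _ = (∏ i, (k.1 i : ℝ)) * ∏ i, (k.1 i : ℝ) ^ (1 / ((d + 1 : ℕ) : ℝ)) := by
      simp only [← prod_mul_distrib, Real.rpow_add (k.cast_pos _), Real.rpow_one]
    _ ≤ (∏ i, (k.1 i : ℝ)) * k.1 0 := by gcongr
    _ = (k.1 0 : ℝ) ^ 2 * ∏ i : Fin d, (k.1 i.succ : ℝ) ^ 1 := by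
      simp only [Fin.prod_univ_succ, pow_one]
      ring
    _ ≤ (k.1 0 : ℝ) ^ s 0 * ∏ i : Fin d, (k.1 i.succ : ℝ) ^ s i.succ := by
      gcongr with i
      exacts [one_le 0, one_le _, hs _]
    _ = ∏ i, (k.1 i : ℝ) ^ s i := (Fin.prod_univ_succ fun i ↦ (k.1 i : ℝ) ^ s i).symm

theorem summable_prod_one_div_pow {d : ℕ} {s : Fin (d + 1) → ℕ} (hs0 : 2 ≤ s 0)
    (hs : ∀ i, 1 ≤ s i) :
    Summable fun k : MZVIndex (d + 1) ↦ ∏ i, (1 : ℝ) / (k.1 i : ℝ) ^ s i := by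
  have exponent : 1 < 1 + 1 / ((d + 1 : ℕ) : ℝ) := lt_add_of_pos_right _ (by positivity)
  have majorant := (summable_prod_fin (fun _ : Fin (d + 1) ↦
    Real.summable_one_div_nat_rpow.2 exponent) fun _ _ ↦ by positivity).comp_injective
      (i := fun k : MZVIndex (d + 1) ↦ k.1) Subtype.val_injective
  refine .of_nonneg_of_le (fun k ↦ prod_nonneg fun i _ ↦ by positivity) (fun k ↦ ?_) majorant
  have pos : 0 < ∏ i, (k.1 i : ℝ) ^ (1 + 1 / ((d + 1 : ℕ) : ℝ)) :=
    prod_pos fun i _ ↦ Real.rpow_pos_of_pos (MZVIndex.cast_pos k i) _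
  simp only [Function.comp_apply, one_div, prod_inv_distrib] at pos ⊢
  exact inv_anti₀ pos (by simpa only [one_div] using prod_rpow_le_prod_pow hs0 hs k)

theorem hasSum_mzv {d : ℕ} {s : Fin (d + 1) → ℕ} (hs0 : 2 ≤ s 0) (hs : ∀ i, 1 ≤ s i) :
    HasSum (fun k : MZVIndex (d + 1) ↦ ∏ i, (1 : ℝ) / (k.1 i : ℝ) ^ s i) (mzv s) :=
  (summable_prod_one_div_pow hs0 hs).hasSum

theorem hasSum_mzv_one {a : ℕ} (ha : 2 ≤ a) :
    HasSum (fun n : ℕ ↦ 1 / ((n : ℝ) + 1) ^ a) (mzv ![a]) := by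
  have h := MZVIndex.oneEquiv.hasSum_iff.2
    (hasSum_mzv (s := ![a]) ha (by simp; omega))
  simpa [Function.comp_def, MZVIndex.oneEquiv] using h

theorem hasSum_mzv_two {a b : ℕ} (ha : 2 ≤ a) (hb : 1 ≤ b) :
    HasSum (fun n : ℕ ↦ 1 / ((n : ℝ) + 1) ^ a * powHarmonic b n) (mzv ![a, b]) := by
  have h : HasSum (fun k : MZVIndex 2 ↦ 1 / ((k.1 0 : ℝ) ^ a * (k.1 1 : ℝ) ^ b))
      (mzv ![a, b]) := by
    simpa [Fin.prod_univ_two] using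
      hasSum_mzv (s := ![a, b]) ha (by simp [Fin.forall_fin_succ]; omega)
  simpa [powHarmonic, mul_sum, mul_comm] using
    MZVIndex.hasSum_two (f := fun m n ↦ 1 / ((m : ℝ) ^ a * (n : ℝ) ^ b)) h

theorem hasSum_mzv_three {a b c : ℕ} (ha : 2 ≤ a) (hb : 1 ≤ b) (hc : 1 ≤ c) :
    HasSum (fun k : MZVIndex 3 ↦ 1 / ((k.1 0 : ℝ) ^ a * (k.1 1 : ℝ) ^ b * (k.1 2 : ℝ) ^ c))
      (mzv ![a, b, c]) := by
  have h := hasSum_mzv (s := ![a, b, c]) ha (by simp [Fin.forall_fin_succ]; omega)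
  simpa [Fin.prod_univ_three] using h

theorem summable_one_div_bot_pow {r : ℕ} (hr : 1 ≤ r) :
    Summable fun k : MZVIndex 3 ↦
      1 / ((k.1 2 : ℝ) ^ r * k.1 1 * (k.1 0 * (k.1 0 + k.1 2))) := by
  refine .of_nonneg_of_le (fun k ↦ by positivity) (fun k ↦ ?_)
    (hasSum_mzv_three le_rfl le_rfl hr).summable
  have pos := MZVIndex.cast_pos k
  have denominator_le : (k.1 0 : ℝ) ^ 2 * (k.1 1 : ℝ) ^ 1 * (k.1 2 : ℝ) ^ r ≤
      (k.1 2 : ℝ) ^ r * k.1 1 * (k.1 0 * (k.1 0 + k.1 2)) := calc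
    _ = (k.1 2 : ℝ) ^ r * k.1 1 * (k.1 0 * k.1 0) := by ring
    _ ≤ _ := by gcongr; exact le_add_of_nonneg_right (pos 2).le
  exact one_div_le_one_div_of_le
    (mul_pos (mul_pos (pow_pos (pos 0) _) (pow_pos (pos 1) _)) (pow_pos (pos 2) _)) denominator_le

theorem summable_one_div_top_pow {s : ℕ} (hs : 2 ≤ s) :
    Summable fun k : MZVIndex 3 ↦
      1 / ((k.1 0 : ℝ) ^ s * k.1 1 * (k.1 0 + k.1 2)) := by
  refine .of_nonneg_of_le (fun k ↦ by positivity) (fun k ↦ ?_)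
    (hasSum_mzv_three hs le_rfl le_rfl).summable
  have pos := MZVIndex.cast_pos k
  have denominator_le : (k.1 0 : ℝ) ^ s * (k.1 1 : ℝ) ^ 1 * (k.1 2 : ℝ) ^ 1 ≤
      (k.1 0 : ℝ) ^ s * k.1 1 * (k.1 0 + k.1 2) := by
    rw [pow_one, pow_one]
    gcongr
    exact le_add_of_nonneg_left (pos 0).le
  exact one_div_le_one_div_of_le
    (mul_pos (mul_pos (pow_pos (pos 0) _) (pow_pos (pos 1) _)) (pow_pos (pos 2) _)) denominator_le

theorem hasSum_one_div_bot_pow {r : ℕ} (hr : 1 ≤ r) :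
    HasSum (fun k : MZVIndex 3 ↦
        1 / ((k.1 2 : ℝ) ^ r * k.1 1 * (k.1 0 * (k.1 0 + k.1 2))))
      (1 / 2 * (mzv ![r + 1, 2] + mzv ![r + 3])) := by
  have h := (summable_one_div_bot_pow hr).hasSum
  have iterated := MZVIndex.hasSum_three_of_bot
    (f := fun k m n ↦ 1 / ((n : ℝ) ^ r * m * (k * (k + n))))
    (g := fun n p ↦ 1 / ((n : ℝ) + 1) ^ (r + 1) *
      (1 / ((n + 1 : ℕ) + 1 + p) * shiftedHarmonic ((n + 1 : ℕ) + 1 + p + 1) (n + 1)))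
    (h := fun n ↦ 1 / ((n : ℝ) + 1) ^ (r + 1) * (1 / 2 * powHarmonic 2 (n + 1)))
    h (fun n p ↦ ?_) fun n ↦ ?_
  · have closed_form := ((hasSum_mzv_two (a := r + 1) (by omega) one_le_two).add
      (hasSum_mzv_one (a := r + 3) (by omega))).mul_left (1 / 2)
    rwa [← iterated.unique (closed_form.congr_fun fun n ↦ ?_)]
    rw [powHarmonic, sum_range_succ, ← powHarmonic]
    field_simp
    ring
  · have top_sum := (hasSum_shiftedHarmonic (x := (n + 1 : ℕ) + 1 + p + 1) (by positivity)
      (n + 1)).mul_left (1 / ((n : ℝ) + 1) ^ (r + 1) * (1 / ((n + 1 : ℕ) + 1 + p)))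
    rw [mul_assoc] at top_sum
    refine top_sum.congr_fun fun q ↦ ?_
    push_cast
    field_simp
    ring
  · rw [← shiftedHarmonic.sum_div_mul_succ]
    exact (hasSum_div_mul_shiftedHarmonic (by positivity) (n + 1)).mul_left _

theorem hasSum_one_div_top_pow {s : ℕ} (hs : 2 ≤ s) :
    HasSum (fun k : MZVIndex 3 ↦ 1 / ((k.1 0 : ℝ) ^ s * k.1 1 * (k.1 0 + k.1 2)))
      (1 / 2 * mzv ![s, 2] - mzv ![s + 1, 1]) := by
  have h := (summable_one_div_top_pow hs).hasSum
  have iterated := MZVIndex.hasSum_three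
    (f := fun k m n ↦ 1 / ((k : ℝ) ^ s * m * (k + n))) h
  have closed_form := ((hasSum_mzv_two hs one_le_two).mul_left (1 / 2)).sub
    (hasSum_mzv_two (a := s + 1) (by omega) le_rfl)
  rwa [← iterated.unique (closed_form.congr_fun fun k ↦ ?_)]
  have inner := congrArg (1 / ((k : ℝ) + 1) ^ s * ·) (shiftedHarmonic.sum_div_mul k)
  rw [mul_sum] at inner
  convert inner using 1
  · refine sum_congr rfl fun m _ ↦ ?_
    simp only [shiftedHarmonic, mul_sum]
    refine sum_congr rfl fun n _ ↦ ?_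
    push_cast
    field_simp
    ring
  · field_simp
    ring

theorem sum_neg_one_pow_div_pow_mul_pow {x y : ℝ} (hx : 0 < x) (hy : 0 < y) (r : ℕ) :
    ∑ a ∈ Icc 2 (r + 1), (-1 : ℝ) ^ a * (1 / (x ^ a * y ^ (r + 2 - a))) =
      (1 / y ^ r - (-1) ^ r / x ^ r) / (x * (x + y)) := by
  have ne : -x⁻¹ ≠ y⁻¹ := by linarith [inv_pos.2 hx, inv_pos.2 hy]
  have geometric := geom₂_sum ne r
  calc
    _ = ∑ i ∈ range r, x⁻¹ ^ 2 * y⁻¹ * ((-x⁻¹) ^ i * y⁻¹ ^ (r - 1 - i)) := by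
      rw [← Ico_add_one_right_eq_Icc, sum_Ico_eq_sum_range]
      refine sum_congr (by congr 1) fun i hi ↦ ?_
      rw [show r + 2 - (2 + i) = r - 1 - i + 1 by have := mem_range.1 hi; omega, neg_pow x⁻¹]
      simp only [one_div, inv_pow, pow_add, mul_inv]
      ring
    _ = _ := by
      rw [← mul_sum, geometric, neg_pow, ← neg_add', inv_add_inv hx.ne' hy.ne']
      simp only [inv_pow]
      field_simp
      ring

theorem weighted_sum_a1c_general (w : ℕ) (hw : 4 ≤ w) :
    ∑ a ∈ Icc 2 (w - 2), (-1 : ℝ) ^ a * mzv ![a, 1, w - 1 - a] =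
      1 / 2 * (mzv ![w - 2, 2] + mzv ![w])
        + (-1) ^ w * (1 / 2 * mzv ![w - 2, 2] - mzv ![w - 1, 1]) := by
  obtain ⟨r, rfl⟩ : ∃ r, w = r + 3 := ⟨w - 3, by omega⟩
  have hr : 1 ≤ r := by omega
  have weighted := hasSum_sum (s := Icc 2 (r + 1)) fun a ha ↦
    (hasSum_mzv_three (mem_Icc.1 ha).1 le_rfl
      (show 1 ≤ r + 2 - a by have := (mem_Icc.1 ha).2; omega)).mul_left ((-1 : ℝ) ^ a)
  refine weighted.unique (((hasSum_one_div_bot_pow hr).add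
    ((hasSum_one_div_top_pow (s := r + 1) (by omega)).mul_left _)).congr_fun fun k ↦ ?_)
  have top_pos := MZVIndex.cast_pos k 0
  have mid_pos := MZVIndex.cast_pos k 1
  have bot_pos := MZVIndex.cast_pos k 2
  calc
    _ = 1 / (k.1 1 : ℝ) * ∑ a ∈ Icc 2 (r + 1),
        (-1 : ℝ) ^ a * (1 / ((k.1 0 : ℝ) ^ a * (k.1 2 : ℝ) ^ (r + 2 - a))) := by
      rw [mul_sum]
      refine sum_congr rfl fun a _ ↦ ?_
      field_simp
    _ = _ := by
      rw [sum_neg_one_pow_div_pow_mul_pow top_pos bot_pos]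
      field_simp
      ring

theorem weighted_sum_a1c (w : ℕ) (hw : 4 ≤ w) (hew : Even w) :
    (∑ a ∈ Finset.Icc 2 (w - 2), (-1 : ℝ) ^ a * mzv ![a, 1, w - 1 - a])
    = mzv ![w - 2, 2] - mzv ![w - 1, 1] + (1 / 2) * mzv ![w] := by
  rw [weighted_sum_a1c_general w hw, hew.neg_one_pow]
  ring
end
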